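/- Let G be a subgroup of SL(2,ℝ) that is a non-uniform lattice and such that ∞ is a cusp of G. Then the Lagrange spectrum 𝓛(G,∞) contains a Hall ray: there exists L₀ ∈ ℝ such that every extended real L with L₀ ≤ L ≤ +∞ belongs to 𝓛(G,∞); in particular, for every real L ≥ L₀ there exists α ∈ ℝ with L_G(α) = L. -/

import Mathlib

open scoped ENNReal
open MeasureTheory

noncomputable section

/-- `SL(2,ℝ)`. -/
abbrev SL2R := Matrix.SpecialLinearGroup (Fin 2) ℝ

/-- The entry in position (1,1) of a matrix in `SL(2,ℝ)`. -/
def entryA (g : SL2R) : ℝ := g.1 0 0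

/-- The entry in position (1,2) of a matrix in `SL(2,ℝ)`. -/
def entryB (g : SL2R) : ℝ := g.1 0 1

/-- The entry in position (2,1) of a matrix in `SL(2,ℝ)`. -/
def entryC (g : SL2R) : ℝ := g.1 1 0

/-- The entry in position (2,2) of a matrix in `SL(2,ℝ)`. -/
def entryD (g : SL2R) : ℝ := g.1 1 1

/-- The Möbius action of `g ∈ SL(2,ℝ)` on the complex plane (well defined on the
upper half-plane): `z ↦ (az+b)/(cz+d)`. -/
def moeb (g : SL2R) (z : ℂ) : ℂ :=
  ((entryA g : ℂ) * z + (entryB g : ℂ)) / ((entryC g : ℂ) * z + (entryD g : ℂ))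

/-- The upper half-plane `ℍ = {z : 0 < Im z}`, as a subset of `ℂ`. -/
def UHP : Set ℂ := {z : ℂ | 0 < z.im}

/-- Hyperbolic area of a subset of the upper half-plane: `∫∫ dx dy / y²`. -/
def hypArea (s : Set ℂ) : ℝ≥0∞ := ∫⁻ z in s, ENNReal.ofReal (1 / z.im ^ 2)

/-- A subgroup of `SL(2,ℝ)` is discrete if each of its elements is isolated
(in the topology of coefficientwise convergence). -/
def IsDiscreteSubgroup (G : Subgroup SL2R) : Prop :=
  ∀ g ∈ G, ∃ ε > (0 : ℝ), ∀ h ∈ G, (∀ i j, |h.1 i j - g.1 i j| < ε) → h = g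

/-- `F` is a (measurable) fundamental domain for the action of `G` on the upper
half-plane: the `G`-translates of `F` cover `ℍ`, and for every `g ∈ G` acting
nontrivially, `F` and `g·F` overlap in hyperbolic area zero. -/
def IsFundDom (G : Subgroup SL2R) (F : Set ℂ) : Prop :=
  F ⊆ UHP ∧ MeasurableSet F ∧
    (∀ z ∈ UHP, ∃ g ∈ G, moeb g z ∈ F) ∧
    (∀ g ∈ G, (∃ z ∈ UHP, moeb g z ≠ z) → hypArea (F ∩ (moeb g '' F)) = 0)

/-- `G ≤ SL(2,ℝ)` is a non-uniform lattice: it is discrete, it admits a fundamental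
domain of finite hyperbolic area, and the quotient `G\ℍ` is not compact (no compact
subset of `ℍ` meets every orbit). -/
def IsNonUniformLattice (G : Subgroup SL2R) : Prop :=
  IsDiscreteSubgroup G ∧
    (∃ F : Set ℂ, IsFundDom G F ∧ hypArea F < ⊤) ∧
    ¬ ∃ K : Set ℂ, IsCompact K ∧ K ⊆ UHP ∧ ∀ z ∈ UHP, ∃ g ∈ G, moeb g z ∈ K

/-- `∞` is a cusp of `G`: `G` contains a parabolic element `[[1,μ],[0,1]]` with `μ ≠ 0`. -/
def HasCuspAtInfty (G : Subgroup SL2R) : Prop :=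
  ∃ μ : ℝ, μ ≠ 0 ∧ ∃ p : SL2R, p.1 = !![1, μ; 0, 1] ∧ p ∈ G

/-- The set of `k > 0` such that there are infinitely many `g ∈ G`, with pairwise
distinct values `g·∞ = a(g)/c(g) ∈ ℝ`, with `|α − g·∞| < 1/(k c(g)²)`. -/
def LagrangeSet (G : Subgroup SL2R) (α : ℝ) : Set ℝ :=
  {k : ℝ | 0 < k ∧
    {v : ℝ | ∃ g ∈ G, entryC g ≠ 0 ∧ v = entryA g / entryC g ∧
      |α - v| < 1 / (k * entryC g ^ 2)}.Infinite}

/-- The Lagrange value `L_G(α) ∈ [0,∞]` (with the convention `sup ∅ = 0`). -/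
def LagrangeValue (G : Subgroup SL2R) (α : ℝ) : ℝ≥0∞ :=
  sSup (ENNReal.ofReal '' LagrangeSet G α)

/-- The Lagrange spectrum of `G` at `∞`. -/
def LagrangeSpectrum (G : Subgroup SL2R) : Set ℝ≥0∞ :=
  {L : ℝ≥0∞ | ∃ α : ℝ, LagrangeValue G α = L}



lemma eA_mul (g h : SL2R) : entryA (g * h) = entryA g * entryA h + entryB g * entryC h := by
  simp [entryA, entryB, entryC, Matrix.mul_apply, Fin.sum_univ_two]
lemma eB_mul (g h : SL2R) : entryB (g * h) = entryA g * entryB h + entryB g * entryD h := by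
  simp [entryA, entryB, entryD, Matrix.mul_apply, Fin.sum_univ_two]
lemma eC_mul (g h : SL2R) : entryC (g * h) = entryC g * entryA h + entryD g * entryC h := by
  simp [entryA, entryD, entryC, Matrix.mul_apply, Fin.sum_univ_two]
lemma eD_mul (g h : SL2R) : entryD (g * h) = entryC g * entryB h + entryD g * entryD h := by
  simp [entryD, entryB, entryC, Matrix.mul_apply, Fin.sum_univ_two]
lemma eA_inv (g : SL2R) : entryA g⁻¹ = entryD g := by
  simp [entryA, entryD, Matrix.SpecialLinearGroup.coe_inv, Matrix.adjugate_fin_two]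
lemma eB_inv (g : SL2R) : entryB g⁻¹ = - entryB g := by
  simp [entryB, Matrix.SpecialLinearGroup.coe_inv, Matrix.adjugate_fin_two]
lemma eC_inv (g : SL2R) : entryC g⁻¹ = - entryC g := by
  simp [entryC, Matrix.SpecialLinearGroup.coe_inv, Matrix.adjugate_fin_two]
lemma eD_inv (g : SL2R) : entryD g⁻¹ = entryA g := by
  simp [entryA, entryD, Matrix.SpecialLinearGroup.coe_inv, Matrix.adjugate_fin_two]
lemma e_one : entryA (1 : SL2R) = 1 ∧ entryB (1 : SL2R) = 0 ∧ entryC (1 : SL2R) = 0 ∧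
    entryD (1 : SL2R) = 1 := by
  simp [entryA, entryB, entryC, entryD]
lemma e_det (g : SL2R) : entryA g * entryD g - entryB g * entryC g = 1 := by
  have := g.2
  rw [Matrix.det_fin_two] at this
  simpa [entryA, entryB, entryC, entryD] using this
lemma e_ext {g h : SL2R} (ha : entryA g = entryA h) (hb : entryB g = entryB h)
    (hc : entryC g = entryC h) (hd : entryD g = entryD h) : g = h := by
  apply Subtype.ext
  ext i j
  fin_cases i <;> fin_cases j <;> simpa [entryA, entryB, entryC, entryD]

lemma disc_one {G : Subgroup SL2R} (hG : IsDiscreteSubgroup G) :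
    ∃ ε > (0 : ℝ), ∀ h ∈ G, |entryA h - 1| < ε → |entryB h| < ε → |entryC h| < ε →
      |entryD h - 1| < ε → h = 1 := by
  obtain ⟨ε, he, h⟩ := hG 1 G.one_mem
  refine ⟨ε, he, fun k hk h1 h2 h3 h4 => h k hk ?_⟩
  intro i j
  fin_cases i <;> fin_cases j <;> simpa [entryA, entryB, entryC, entryD]

def bddSet (G : Subgroup SL2R) (C : ℝ) : Set SL2R :=
  {g | g ∈ G ∧ |entryA g| ≤ C ∧ |entryB g| ≤ C ∧ |entryC g| ≤ C ∧ |entryD g| ≤ C}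

lemma bdd_finite {G : Subgroup SL2R} (hG : IsDiscreteSubgroup G) (C : ℝ) :
    (bddSet G C).Finite := by
  by_contra hinf
  have hinf : (bddSet G C).Infinite := hinf
  obtain ⟨ε, he, hε⟩ := disc_one hG
  let u := hinf.natEmbedding
  let f : SL2R → ℝ × ℝ × ℝ × ℝ := fun g => (entryA g, entryB g, entryC g, entryD g)
  have hK : IsCompact (Set.Icc (-C) C ×ˢ (Set.Icc (-C) C ×ˢ (Set.Icc (-C) C ×ˢ Set.Icc (-C) C))) :=
    isCompact_Icc.prod (isCompact_Icc.prod (isCompact_Icc.prod isCompact_Icc))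
  have hmem : ∀ n, f (u n) ∈
      (Set.Icc (-C) C ×ˢ (Set.Icc (-C) C ×ˢ (Set.Icc (-C) C ×ˢ Set.Icc (-C) C))) := by
    intro n
    obtain ⟨_, h1, h2, h3, h4⟩ := (u n).2
    exact ⟨abs_le.1 h1, abs_le.1 h2, abs_le.1 h3, abs_le.1 h4⟩
  obtain ⟨x, -, φ, hφ, hlim⟩ := hK.tendsto_subseq hmem
  have hC : 0 ≤ C := le_trans (abs_nonneg _) (u 0).2.2.1
  have hδ : 0 < ε / (2 * C + 1) := by positivity
  obtain ⟨N, hN⟩ := Metric.cauchySeq_iff'.1 hlim.cauchySeq _ hδ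
  have h1 := hN (N + 1) (by omega)
  set g := (u (φ N)).1 with hg
  set h := (u (φ (N+1))).1 with hh
  have hne : h ≠ g := by
    intro hc
    have := u.injective (Subtype.ext hc)
    have := hφ.injective this
    omega
  simp only [Function.comp, Prod.dist_eq, Real.dist_eq, max_lt_iff, f] at h1
  obtain ⟨d1, d2, d3, d4⟩ := h1
  obtain ⟨gG, ga, gb, gc, gd⟩ := (u (φ N)).2
  have hG' := (u (φ (N+1))).2.1
  apply hne
  have key : ∀ x y p q : ℝ, |x| ≤ C → |y| ≤ C → |p| < ε / (2 * C + 1) → |q| < ε / (2 * C + 1) →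
      |x * p + y * q| < ε := by
    intro x y p q hx hy hp hq
    have e : ε / (2 * C + 1) * (2 * C + 1) = ε := by field_simp
    calc |x * p + y * q| ≤ |x| * |p| + |y| * |q| := by
            rw [← abs_mul, ← abs_mul]; exact abs_add_le _ _
      _ ≤ C * (ε / (2 * C + 1)) + C * (ε / (2 * C + 1)) := by gcongr
      _ < ε := by nlinarith
  have : g⁻¹ * h = 1 := by
    have hd := e_det g
    apply hε _ (G.mul_mem (G.inv_mem gG) hG')
    · rw [eA_mul, eA_inv, eB_inv]
      convert key (entryD g) (-entryB g) _ _ gd (by rwa [abs_neg]) d1 d3 using 2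
      linear_combination hd
    · rw [eB_mul, eA_inv, eB_inv]
      convert key (entryD g) (-entryB g) _ _ gd (by rwa [abs_neg]) d2 d4 using 2
      ring
    · rw [eC_mul, eC_inv, eD_inv]
      convert key (-entryC g) (entryA g) _ _ (by rwa [abs_neg]) ga d1 d3 using 2
      ring
    · rw [eD_mul, eC_inv, eD_inv]
      convert key (-entryC g) (entryA g) _ _ (by rwa [abs_neg]) ga d2 d4 using 2
      linear_combination hd
  exact (inv_mul_eq_one.1 this).symm

/-- all integer translates -/
def HasTr (G : Subgroup SL2R) (μ : ℝ) : Prop :=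
  ∀ k : ℤ, ∃ q ∈ G, entryA q = 1 ∧ entryB q = k * μ ∧ entryC q = 0 ∧ entryD q = 1

lemma hasTr_of_cusp {G : Subgroup SL2R} (h : HasCuspAtInfty G) : ∃ μ > 0, HasTr G μ := by
  have aux : ∀ μ : ℝ, (∃ q ∈ G, entryA q = 1 ∧ entryB q = μ ∧ entryC q = 0 ∧ entryD q = 1) →
      HasTr G μ := by
    rintro μ ⟨p, hp, pa, pb, pc, pd⟩ k
    induction k using Int.induction_on with
    | zero => exact ⟨1, G.one_mem, by simp [e_one]⟩
    | succ i ih =>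
      obtain ⟨q, hq, a, b, c, d⟩ := ih
      refine ⟨q * p, G.mul_mem hq hp, ?_⟩
      simp only [eA_mul, eB_mul, eC_mul, eD_mul, a, b, c, d, pa, pb, pc, pd]
      refine ⟨by ring, by push_cast; ring, by ring, by ring⟩
    | pred i ih =>
      obtain ⟨q, hq, a, b, c, d⟩ := ih
      refine ⟨q * p⁻¹, G.mul_mem hq (G.inv_mem hp), ?_⟩
      simp only [eA_mul, eB_mul, eC_mul, eD_mul, eA_inv, eB_inv, eC_inv, eD_inv, a, b, c, d, pa, pb, pc, pd]
      refine ⟨by ring, by push_cast; ring, by ring, by ring⟩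
  obtain ⟨μ, hμ, p, hp, hpG⟩ := h
  have e1 : entryA p = 1 ∧ entryB p = μ ∧ entryC p = 0 ∧ entryD p = 1 := by
    simp [entryA, entryB, entryC, entryD, hp]
  rcases lt_or_gt_of_ne hμ with h | h
  · refine ⟨-μ, by linarith, aux _ ⟨p⁻¹, G.inv_mem hpG, ?_⟩⟩
    simp [eA_inv, eB_inv, eC_inv, eD_inv, e1]
  · exact ⟨μ, h, aux _ ⟨p, hpG, e1⟩⟩

lemma fin_lb {S : Set SL2R} (hS : S.Finite) :
    ∃ c0 > (0:ℝ), c0 ≤ 1 ∧ ∀ g ∈ S, entryC g ≠ 0 → c0 ≤ |entryC g| := by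
  induction S, hS using Set.Finite.induction_on with
  | empty => exact ⟨1, one_pos, le_rfl, by simp⟩
  | @insert a S _ _ ih =>
    obtain ⟨c0, h0, h1, h⟩ := ih
    by_cases ha : entryC a = 0
    · refine ⟨c0, h0, h1, ?_⟩
      rintro g (rfl | hg) hc
      · exact absurd ha hc
      · exact h g hg hc
    · refine ⟨min c0 |entryC a|, lt_min h0 (abs_pos.2 ha), (min_le_left _ _).trans h1, ?_⟩
      rintro g (rfl | hg) hc
      · exact min_le_right _ _
      · exact (min_le_left _ _).trans (h g hg hc)

lemma exists_c0 {G : Subgroup SL2R} (hG : IsDiscreteSubgroup G) {μ : ℝ} (hμ : 0 < μ)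
    (hT : HasTr G μ) : ∃ c0 > (0:ℝ), ∀ g ∈ G, entryC g ≠ 0 → c0 ≤ |entryC g| := by
  obtain ⟨c0, h0, h1, h⟩ := fin_lb (bdd_finite hG (1 + μ * (2 + μ)))
  refine ⟨c0, h0, fun g hg hc => ?_⟩
  by_cases hc1 : 1 ≤ |entryC g|
  · linarith
  push Not at hc1
  have hcp : 0 < |entryC g| := abs_pos.2 hc
  have rnd : ∀ a : ℝ, ∃ k : ℤ, |a + k * μ * entryC g - 1| ≤ μ * |entryC g| := by
    intro a
    refine ⟨round ((1 - a) / (μ * entryC g)), ?_⟩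
    have h2 := abs_sub_round ((1 - a) / (μ * entryC g))
    set k := round ((1 - a) / (μ * entryC g))
    have : a + k * μ * entryC g - 1 = -(((1 - a) / (μ * entryC g) - k) * (μ * entryC g)) := by
      field_simp; ring
    rw [this, abs_neg, abs_mul, abs_mul μ, abs_of_pos hμ]
    have : 0 < μ * |entryC g| := by positivity
    nlinarith
  obtain ⟨k, hk⟩ := rnd (entryA g)
  obtain ⟨l, hl⟩ := rnd (entryD g)
  obtain ⟨p, hp, pa, pb, pc, pd⟩ := hT k
  obtain ⟨q, hq, qa, qb, qc, qd⟩ := hT l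
  have hmem : p * g * q ∈ G := G.mul_mem (G.mul_mem hp hg) hq
  have eA : entryA (p * g * q) = entryA g + k * μ * entryC g := by
    simp only [eA_mul, eB_mul, eC_mul, eD_mul, pa, pb, pc, pd, qa, qb, qc, qd]; ring
  have eC : entryC (p * g * q) = entryC g := by
    simp only [eA_mul, eB_mul, eC_mul, eD_mul, pa, pb, pc, pd, qa, qb, qc, qd]; ring
  have eD : entryD (p * g * q) = entryD g + l * μ * entryC g := by
    simp only [eA_mul, eB_mul, eC_mul, eD_mul, pa, pb, pc, pd, qa, qb, qc, qd]; ring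
  rw [← eA] at hk
  rw [← eD] at hl
  rw [← eC] at hk hl hc hcp hc1 ⊢
  have hdet := e_det (p * g * q)
  set r := p * g * q
  have hmc : μ * |entryC r| ≤ μ := by nlinarith
  have ha : |entryA r| ≤ 1 + μ := by
    rw [abs_le] at *; constructor <;> linarith
  have hd : |entryD r| ≤ 1 + μ := by
    rw [abs_le] at *; constructor <;> linarith
  have hb : |entryB r| ≤ μ * (2 + μ) := by
    have : |entryB r| * |entryC r| ≤ μ * (2 + μ) * |entryC r| := by
      rw [← abs_mul]
      have : entryB r * entryC r = (entryA r - 1) * entryD r + (entryD r - 1) := by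
        linear_combination -hdet
      rw [this]
      calc _ ≤ |entryA r - 1| * |entryD r| + |entryD r - 1| := by
              rw [← abs_mul]; exact abs_add_le _ _
        _ ≤ (μ * |entryC r|) * (1 + μ) + μ * |entryC r| := by gcongr
        _ = _ := by ring
    exact le_of_mul_le_mul_right this hcp
  refine h r ⟨hmem, ?_, ?_, ?_, ?_⟩ hc <;> nlinarith

lemma a_sq_of_c_zero {G : Subgroup SL2R} (hG : IsDiscreteSubgroup G) {μ : ℝ} (hμ : 0 < μ)
    (hT : HasTr G μ) {g : SL2R} (hg : g ∈ G) (hc : entryC g = 0) : entryA g ^ 2 = 1 := by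
  have aux : ∀ g ∈ G, entryC g = 0 → ¬ (entryA g ^ 2 < 1) := by
    intro g hg hc hlt
    have hdet := e_det g
    rw [hc, mul_zero, sub_zero] at hdet
    have ha0 : entryA g ≠ 0 := by intro h; rw [h] at hdet; simp at hdet
    have : ∀ n : ℕ, ∃ q ∈ G, entryA q = 1 ∧ entryB q = (entryA g ^ 2) ^ n * μ ∧ entryC q = 0 ∧
        entryD q = 1 := by
      intro n
      induction n with
      | zero => simpa using hT 1
      | succ n ih =>
        obtain ⟨q, hq, a, b, c, d⟩ := ih
        refine ⟨g * q * g⁻¹, G.mul_mem (G.mul_mem hg hq) (G.inv_mem hg), ?_⟩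
        simp only [eA_mul, eB_mul, eC_mul, eD_mul, eA_inv, eB_inv, eC_inv, eD_inv, a, b, c, d, hc]
        refine ⟨by linear_combination hdet, by ring, by ring, by linear_combination hdet⟩
    choose q hqG qa qb qc qd using this
    have hinj : Function.Injective q := by
      intro m n hmn
      have h1 := qb m
      rw [hmn, qb n] at h1
      have h2 := mul_right_cancel₀ hμ.ne' h1
      exact (pow_right_injective₀ (by positivity) hlt.ne h2).symm
    refine (Set.infinite_of_injective_forall_mem hinj (s := bddSet G (1 + μ)) ?_) (bdd_finite hG _)
    intro n
    have h0 : 0 ≤ (entryA g ^ 2) ^ n := by positivity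
    have h1 : (entryA g ^ 2) ^ n ≤ 1 := pow_le_one₀ (by positivity) hlt.le
    refine ⟨hqG n, ?_, ?_, ?_, ?_⟩
    · rw [qa, abs_one]; linarith
    · rw [qb, abs_of_nonneg (by positivity)]; nlinarith
    · rw [qc, abs_zero]; linarith
    · rw [qd, abs_one]; linarith
  have h1 := aux g hg hc
  have h2 := aux g⁻¹ (G.inv_mem hg) (by rw [eC_inv, hc, neg_zero])
  rw [eA_inv] at h2
  have hdet := e_det g
  rw [hc, mul_zero, sub_zero] at hdet
  push Not at h1 h2
  have : entryA g ^ 2 * entryD g ^ 2 = 1 := by rw [← mul_pow, hdet, one_pow]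
  nlinarith

/-- determinant pairing of first columns -/
def dt (g h : SL2R) : ℝ := entryA g * entryC h - entryC g * entryA h

lemma dt_eq (g h : SL2R) : dt g h = entryC (g⁻¹ * h) := by
  rw [eC_mul, eC_inv, eD_inv, dt]; ring

lemma dt_left (k g h : SL2R) : dt (k * g) (k * h) = dt g h := by
  rw [dt_eq, dt_eq]; congr 1; group

lemma dt_one (g : SL2R) : dt 1 g = entryC g := by simp [dt, e_one]

lemma dt_zero {G : Subgroup SL2R} (hG : IsDiscreteSubgroup G) {μ : ℝ} (hμ : 0 < μ)
    (hT : HasTr G μ) {g h : SL2R} (hg : g ∈ G) (hh : h ∈ G) (h0 : dt g h = 0) :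
    ∃ s : ℝ, s ^ 2 = 1 ∧ entryA h = s * entryA g ∧ entryC h = s * entryC g := by
  rw [dt_eq] at h0
  have := a_sq_of_c_zero hG hμ hT (G.mul_mem (G.inv_mem hg) hh) h0
  refine ⟨_, this, ?_, ?_⟩
  · have e : h = g * (g⁻¹ * h) := by group
    conv_lhs => rw [e, eA_mul, h0]
    ring
  · have e : h = g * (g⁻¹ * h) := by group
    conv_lhs => rw [e, eC_mul, h0]
    ring


lemma moeb_coe (g : SL2R) (z : UpperHalfPlane) : ((g • z : UpperHalfPlane) : ℂ) = moeb g z := by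
  rw [UpperHalfPlane.coe_specialLinearGroup_apply]
  simp [moeb, entryA, entryB, entryC, entryD]

lemma moeb_eq (g : SL2R) (z : UpperHalfPlane) :
    ((g • z : UpperHalfPlane) : ℂ) * ((entryC g : ℂ) * z + entryD g) = entryA g * z + entryB g := by
  rw [moeb_coe, moeb]
  have h := UpperHalfPlane.denom_ne_zero (g : GL (Fin 2) ℝ) z
  have e : (entryC g : ℂ) * z + entryD g ≠ 0 := by
    simpa [UpperHalfPlane.denom, entryC, entryD] using h
  rw [div_mul_cancel₀ _ e]

lemma vol_smul (g : SL2R) (S : Set UpperHalfPlane) :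
    volume ((fun z => g • z) ⁻¹' S) = volume S := by
  exact measure_preimage_smul volume (g : GL (Fin 2) ℝ) S

lemma hyp_vol {F : Set ℂ} (hF : F ⊆ UHP) :
    volume (UpperHalfPlane.coe ⁻¹' F) = hypArea F := by
  rw [UpperHalfPlane.volume_eq_lintegral, hypArea, Set.image_preimage_eq_of_subset]
  · congr 1
    ext z
    rw [ENNReal.ofReal, ENNReal.coe_inj]
    ext
    rw [Real.coe_toNNReal _ (by positivity)]
    simp
  · intro z hz
    exact ⟨⟨z, hF hz⟩, rfl⟩

lemma vol_strip (x η : ℝ) (hη : 0 < η) :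
    volume {z : UpperHalfPlane | |z.re - x| ≤ η ∧ z.im < 1} = ⊤ := by
  have main : ∀ δ : ℝ, 0 < δ → δ < 1 → ENNReal.ofReal (η / δ) ≤
      volume {z : UpperHalfPlane | |z.re - x| ≤ η ∧ z.im < 1} := by
    intro δ h0 h1
    let R : Set ℂ := Complex.measurableEquivRealProd ⁻¹' (Set.Icc (x - η) (x + η) ×ˢ Set.Icc (δ/2) δ)
    have hRm : MeasurableSet R :=
      Complex.measurableEquivRealProd.measurable (measurableSet_Icc.prod measurableSet_Icc)
    have hRU : R ⊆ UHP := by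
      rintro z ⟨-, h, -⟩
      simp only [Complex.measurableEquivRealProd_apply] at h
      show 0 < z.im
      linarith
    have hvol : volume R = ENNReal.ofReal (2 * η) * ENNReal.ofReal (δ / 2) := by
      rw [Complex.volume_preserving_equiv_real_prod.measure_preimage
        (measurableSet_Icc.prod measurableSet_Icc).nullMeasurableSet, Measure.volume_eq_prod,
        Measure.prod_prod, Real.volume_Icc, Real.volume_Icc]
      congr 2 <;> ring
    calc ENNReal.ofReal (η / δ) = ENNReal.ofReal (1 / δ ^ 2) * volume R := by
          rw [hvol, ← ENNReal.ofReal_mul (by positivity), ← ENNReal.ofReal_mul (by positivity)]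
          congr 1; field_simp
      _ = ∫⁻ z in R, ENNReal.ofReal (1 / δ ^ 2) := by rw [setLIntegral_const]
      _ ≤ hypArea R := by
          apply setLIntegral_mono' hRm
          rintro z ⟨-, h, h'⟩
          simp only [Complex.measurableEquivRealProd_apply] at h h'
          apply ENNReal.ofReal_le_ofReal
          have : 0 < z.im := by linarith
          gcongr
      _ = volume (UpperHalfPlane.coe ⁻¹' R) := (hyp_vol hRU).symm
      _ ≤ _ := by
          apply measure_mono
          rintro z ⟨⟨h, h'⟩, -, h2⟩
          simp only [Complex.measurableEquivRealProd_apply] at h h' h2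
          refine ⟨?_, ?_⟩
          · rw [abs_le]
            have : z.re = (z : ℂ).re := rfl
            constructor <;> linarith
          · have : z.im = (z : ℂ).im := rfl
            linarith
  by_contra hne
  obtain ⟨b, hb⟩ : ∃ b : NNReal, (b : ℝ≥0∞) =
      volume {z : UpperHalfPlane | |z.re - x| ≤ η ∧ z.im < 1} := ⟨_, ENNReal.coe_toNNReal hne⟩
  rw [← hb] at main
  have hb' : (0:ℝ) ≤ b := b.2
  set δ := min (1/2) (η / (b + 1)) with hd
  have d0 : 0 < δ := by positivity
  have h1 := main δ d0 (lt_of_le_of_lt (min_le_left _ _) (by norm_num))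
  have h2 : η / δ ≤ b := by
    rw [ENNReal.ofReal_le_iff_le_toReal (by simp)] at h1
    simpa using h1
  rw [div_le_iff₀ d0] at h2
  have h3 : δ * (b + 1) ≤ η := by
    have := min_le_right (1/2) (η / ((b:ℝ) + 1))
    rwa [← hd, le_div_iff₀ (by positivity)] at this
  nlinarith

lemma strip_fin {G : Subgroup SL2R} (hG : IsDiscreteSubgroup G) {μ : ℝ} (hμ : 0 < μ)
    (hT : HasTr G μ) (x η : ℝ) (hη : 0 < η)
    (hno : ∀ g ∈ G, entryC g ≠ 0 → 2 * η ≤ |entryA g / entryC g - x|) :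
    {g : SL2R | g ∈ G ∧ ∃ z : UpperHalfPlane, |z.re - x| ≤ η ∧ |(g • z).re - x| ≤ η}.Finite := by
  obtain ⟨c0, h0, hc0⟩ := exists_c0 hG hμ hT
  set K := 1 / (c0 * η) + 1 / η * (|x| + η) with hK
  have K0 : 0 < K := by positivity
  apply (bdd_finite hG (K + 1 / η + (K^2+1)/c0 + 2 * η + 1)).subset
  rintro g ⟨hg, z, hz, hw⟩
  have key := moeb_eq g z
  have hdet := e_det g
  set w := g • z
  have p1 : 0 < 1 / η := by positivity
  have p2 : 0 < (K^2+1)/c0 := by positivity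
  by_cases hc : entryC g = 0
  · have ha := a_sq_of_c_zero hG hμ hT hg hc
    have hda : entryD g = entryA g := by
      rw [hc] at hdet
      linear_combination entryA g * hdet - entryD g * ha
    have k1 := congrArg Complex.re key
    simp [hc, hda] at k1
    have ha1 : |entryA g| = 1 := by
      rw [← sq_eq_sq₀ (abs_nonneg _) zero_le_one, sq_abs, ha, one_pow]
    have hb : |entryB g| ≤ 2 * η := by
      have : entryB g = entryA g * ((w.re - x) - (z.re - x)) := by linear_combination -k1
      rw [this, abs_mul, ha1, one_mul]
      calc _ ≤ |w.re - x| + |z.re - x| := abs_sub _ _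
        _ ≤ _ := by linarith
    refine ⟨hg, ?_, ?_, ?_, ?_⟩
    · rw [ha1]; linarith
    · linarith
    · rw [hc, abs_zero]; linarith
    · rw [hda, ha1]; linarith
  · have hcp : 0 < |entryC g| := abs_pos.2 hc
    have k2 : ((w : ℂ) * entryC g - entryA g) * ((entryC g : ℂ) * z + entryD g) = -1 := by
      have hdet' : (entryA g : ℂ) * entryD g - entryB g * entryC g = 1 := by exact_mod_cast hdet
      linear_combination (entryC g : ℂ) * key - hdet'
    have k3 := congrArg norm k2
    rw [norm_mul, norm_neg, norm_one] at k3
    have far : ∀ v u : ℝ, 2 * η ≤ |v - x| → |u - x| ≤ η → η ≤ |u - v| := by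
      intro v u h1 h2
      have : |v - x| ≤ |u - v| + |u - x| := by
        rw [abs_sub_comm u v]; exact abs_sub_le _ _ _
      linarith
    have n1 : |w.re * entryC g - entryA g| ≤ ‖(w : ℂ) * entryC g - entryA g‖ := by
      have := Complex.abs_re_le_norm ((w : ℂ) * entryC g - entryA g)
      simpa using this
    have n2 : |entryC g * z.re + entryD g| ≤ ‖(entryC g : ℂ) * z + entryD g‖ := by
      have := Complex.abs_re_le_norm ((entryC g : ℂ) * z + entryD g)
      simpa using this
    have m1 : |entryC g| * η ≤ |w.re * entryC g - entryA g| := by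
      have h1 := far _ _ (hno g hg hc) hw
      have : w.re * entryC g - entryA g = entryC g * (w.re - entryA g / entryC g) := by
        field_simp
      rw [this, abs_mul]; gcongr
    have m2 : |entryC g| * η ≤ |entryC g * z.re + entryD g| := by
      have h0 := hno g⁻¹ (G.inv_mem hg) (by rw [eC_inv]; simpa using hc)
      rw [eA_inv, eC_inv] at h0
      have h1 := far _ _ h0 hz
      have : entryC g * z.re + entryD g = entryC g * (z.re - entryD g / -entryC g) := by
        field_simp; ring
      rw [this, abs_mul]; gcongr
    set X := ‖(w : ℂ) * entryC g - entryA g‖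
    set Y := ‖(entryC g : ℂ) * z + entryD g‖
    have hcc := hc0 g hg hc
    have hX : |entryC g| * η ≤ X := m1.trans n1
    have hY : |entryC g| * η ≤ Y := m2.trans n2
    have hC : |entryC g| ≤ 1 / η := by
      rw [le_div_iff₀ hη]
      have : 0 < |entryC g| * η := by positivity
      nlinarith
    have hX2 : X ≤ 1 / (c0 * η) := by
      rw [le_div_iff₀ (by positivity), ← k3]
      have : c0 * η ≤ Y := le_trans (by gcongr) hY
      gcongr
    have hY2 : Y ≤ 1 / (c0 * η) := by
      rw [le_div_iff₀ (by positivity), ← k3, mul_comm X]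
      have : c0 * η ≤ X := le_trans (by gcongr) hX
      gcongr
    have bd : ∀ u : ℝ, |u - x| ≤ η → |entryC g * u| ≤ 1 / η * (|x| + η) := by
      intro u hu
      rw [abs_mul]
      have : |u| ≤ |x| + η := by
        have : |u| ≤ |u - x| + |x| := by
          calc |u| = |u - x + x| := by ring_nf
            _ ≤ _ := abs_add_le _ _
        linarith
      gcongr
    have hA : |entryA g| ≤ K := by
      have e : entryA g = entryC g * w.re - (w.re * entryC g - entryA g) := by ring
      rw [e]
      have := abs_sub (entryC g * w.re) (w.re * entryC g - entryA g)
      have := bd _ hw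
      linarith
    have hD : |entryD g| ≤ K := by
      have e : entryD g = (entryC g * z.re + entryD g) - entryC g * z.re := by ring
      rw [e]
      have := abs_sub (entryC g * z.re + entryD g) (entryC g * z.re)
      have := bd _ hz
      linarith
    have hB : |entryB g| ≤ (K^2+1)/c0 := by
      rw [le_div_iff₀ h0]
      calc |entryB g| * c0 ≤ |entryB g| * |entryC g| := by gcongr
        _ = |entryA g * entryD g - 1| := by rw [← abs_mul]; congr 1; linear_combination -hdet
        _ ≤ |entryA g| * |entryD g| + 1 := by
            have := abs_sub (entryA g * entryD g) 1
            rwa [abs_mul, abs_one] at this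
        _ ≤ K * K + 1 := by gcongr
        _ = _ := by ring
    refine ⟨hg, ?_, ?_, ?_, ?_⟩ <;> linarith

lemma G_countable {G : Subgroup SL2R} (hG : IsDiscreteSubgroup G) : Countable G := by
  have : (⋃ n : ℕ, bddSet G n).Countable :=
    Set.countable_iUnion fun n => (bdd_finite hG n).countable
  apply (this.mono _).to_subtype
  intro g hg
  obtain ⟨n, hn⟩ := exists_nat_ge (|entryA g| + |entryB g| + |entryC g| + |entryD g|)
  have h1 := abs_nonneg (entryA g)
  have h2 := abs_nonneg (entryB g)
  have h3 := abs_nonneg (entryC g)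
  have h4 := abs_nonneg (entryD g)
  refine Set.mem_iUnion.2 ⟨n, hg, ?_, ?_, ?_, ?_⟩ <;> linarith

lemma dense_orbit {G : Subgroup SL2R} (hG : IsNonUniformLattice G) {μ : ℝ} (hμ : 0 < μ)
    (hT : HasTr G μ) (x r : ℝ) (hr : 0 < r) :
    ∃ g ∈ G, entryC g ≠ 0 ∧ |entryA g / entryC g - x| < r := by
  by_contra hno
  push Not at hno
  obtain ⟨hd, ⟨F, ⟨hFU, hFm, hFc, -⟩, hFa⟩, -⟩ := hG
  have hfin := strip_fin hd hμ hT x (r/2) (by linarith) (by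
    intro g hg hc
    have := hno g hg hc
    linarith)
  have hcount := G_countable hd
  set T := {g : SL2R | g ∈ G ∧ ∃ z : UpperHalfPlane, |z.re - x| ≤ r/2 ∧ |(g • z).re - x| ≤ r/2}
  set W : Set UpperHalfPlane := {z | |z.re - x| ≤ r/2 ∧ z.im < 1} with hW
  have hWt : volume W = ⊤ := vol_strip x (r/2) (by linarith)
  set F' : Set UpperHalfPlane := UpperHalfPlane.coe ⁻¹' F
  have hF'm : MeasurableSet F' := UpperHalfPlane.measurable_coe hFm
  have hF'a : volume F' < ⊤ := by rw [hyp_vol hFU]; exact hFa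
  have hWm : MeasurableSet W := by
    have c1 : Measurable (fun z : UpperHalfPlane => |z.re - x|) :=
      ((UpperHalfPlane.continuous_re.sub continuous_const).abs).measurable
    have c2 : Measurable (fun z : UpperHalfPlane => z.im) := UpperHalfPlane.continuous_im.measurable
    exact (measurableSet_le c1 measurable_const).inter (measurableSet_lt c2 measurable_const)
  have hsm : ∀ g : SL2R, Measurable (fun z : UpperHalfPlane => g • z) := fun g =>
    (continuous_const_smul g).measurable
  have cov : W ⊆ ⋃ g : G, ((fun z => (g : SL2R) • z) ⁻¹' (F' ∩ (fun z => (g : SL2R)⁻¹ • z) ⁻¹' W)) := by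
    intro z hz
    obtain ⟨g, hg, hgz⟩ := hFc z z.im_pos
    refine Set.mem_iUnion.2 ⟨⟨g, hg⟩, ?_, ?_⟩
    · show ((g • z : UpperHalfPlane) : ℂ) ∈ F
      rw [moeb_coe]; exact hgz
    · show g⁻¹ • g • z ∈ W
      rwa [inv_smul_smul]
  have pw : ∀ z : UpperHalfPlane, ∑' g : G,
      ((fun z => (g : SL2R)⁻¹ • z) ⁻¹' W).indicator (fun _ => (1:ℝ≥0∞)) z ≤ hfin.toFinset.card := by
    intro z
    by_cases hex : ∃ g0 : G, (g0 : SL2R)⁻¹ • z ∈ W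
    · obtain ⟨g0, hg0⟩ := hex
      have hsub : ∀ g : G, (g : SL2R)⁻¹ • z ∈ W → (g : SL2R)⁻¹ * g0 ∈ hfin.toFinset := by
        intro g hgz
        rw [Set.Finite.mem_toFinset]
        refine ⟨G.mul_mem (G.inv_mem g.2) g0.2, (g0 : SL2R)⁻¹ • z, hg0.1, ?_⟩
        rw [mul_smul, smul_inv_smul]
        exact hgz.1
      have hSf : {g : G | (g : SL2R)⁻¹ • z ∈ W}.Finite := by
        apply Set.Finite.of_injOn (f := fun g : G => (g : SL2R)⁻¹ * g0) (t := T)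
        · intro g hg
          simpa using hsub g hg
        · intro g _ g' _ h
          simpa using h
        · exact hfin
      rw [tsum_eq_sum (s := hSf.toFinset)]
      · calc _ ≤ ∑ g ∈ hSf.toFinset, (1:ℝ≥0∞) := by
              apply Finset.sum_le_sum
              intro g _
              exact Set.indicator_le_self _ _ _
          _ = (hSf.toFinset.card : ℝ≥0∞) := by simp
          _ ≤ _ := by
              have : hSf.toFinset.card ≤ hfin.toFinset.card := by
                apply Finset.card_le_card_of_injOn (fun g : G => (g : SL2R)⁻¹ * g0)
                · intro g hg
                  apply hsub
                  simpa using hg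
                · intro g _ g' _ h
                  simpa using h
              exact_mod_cast this
      · intro g hg
        apply Set.indicator_of_notMem
        simpa using hg
    · push Not at hex
      have : ∀ g : G, ((fun z => (g : SL2R)⁻¹ • z) ⁻¹' W).indicator (fun _ => (1:ℝ≥0∞)) z = 0 :=
        fun g => Set.indicator_of_notMem (s := (fun z => (g : SL2R)⁻¹ • z) ⁻¹' W) (hex g) _
      simp [this]
  have : volume W ≤ hfin.toFinset.card * volume F' := by
    calc volume W ≤ ∑' g : G, volume ((fun z => (g : SL2R) • z) ⁻¹'
            (F' ∩ (fun z => (g : SL2R)⁻¹ • z) ⁻¹' W)) :=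
          (measure_mono cov).trans (measure_iUnion_le _)
      _ = ∑' g : G, ∫⁻ z in F', ((fun z => (g : SL2R)⁻¹ • z) ⁻¹' W).indicator (fun _ => (1:ℝ≥0∞)) z := by
          congr 1; ext g
          rw [vol_smul, lintegral_indicator ((hsm _) hWm), setLIntegral_one,
            Measure.restrict_apply ((hsm _) hWm), Set.inter_comm]
      _ = ∫⁻ z in F', ∑' g : G, ((fun z => (g : SL2R)⁻¹ • z) ⁻¹' W).indicator (fun _ => (1:ℝ≥0∞)) z := by
          rw [lintegral_tsum]
          intro g
          exact (measurable_const.indicator ((hsm _) hWm)).aemeasurable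
      _ ≤ ∫⁻ z in F', (hfin.toFinset.card : ℝ≥0∞) := lintegral_mono pw
      _ = _ := by rw [setLIntegral_const]
  rw [hWt, top_le_iff] at this
  exact (ENNReal.mul_lt_top (by simp) hF'a).ne this


lemma sch_two {ι : Type*} {v c : ι → ℝ} {c0 : ℝ} (h0 : 0 < c0) (hc : ∀ i, c0 ≤ c i)
    (sep : ∀ i j, v i ≠ v j → c0 / (c i * c j) ≤ |v i - v j|) {R : ℝ} (hR : 0 < R)
    {y y' u : ℝ} {k k' : ι} (h1 : y' - y ≤ c0 / 32 / R ^ 2)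
    (h2 : 5 / 16 * (c0 / 32 / R ^ 2) ≤ y' - y) (hk : R ≤ c k) (hk' : R ≤ c k')
    (gk : c k < 4 * R) (gk' : c k' < 4 * R)
    (b : |y + u - v k| < c0 / 1024 / c k ^ 2) (b' : |y' + u - v k'| < c0 / 1024 / c k' ^ 2) :
    False := by
  have e1 : c0 / 1024 / c k ^ 2 ≤ c0 / 1024 / R ^ 2 := by gcongr
  have e2 : c0 / 1024 / c k' ^ 2 ≤ c0 / 1024 / R ^ 2 := by gcongr
  have hX : 0 < c0 / R ^ 2 := by positivity
  have r1 : c0 / 32 / R ^ 2 = (c0 / R ^ 2) / 32 := by ring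
  have r2 : c0 / 1024 / R ^ 2 = (c0 / R ^ 2) / 1024 := by ring
  rw [r1] at h1 h2
  rw [r2] at e1 e2
  rw [abs_lt] at b b'
  by_cases hv : v k = v k'
  · rw [hv] at b
    linarith
  · have h3 := sep _ _ hv
    have : (c0 / R ^ 2) / 16 < c0 / (c k * c k') := by
      have : (c0 / R ^ 2) / 16 = c0 / ((4 * R) * (4 * R)) := by field_simp; ring
      rw [this]
      have : 0 < c k := by linarith
      have : 0 < c k' := by linarith
      gcongr
    have h4 : |v k - v k'| ≤ (c0 / R ^ 2) / 16 := by
      rw [abs_le]; constructor <;> linarith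
    linarith

lemma sch_step {ι : Type*} {v c : ι → ℝ} {c0 : ℝ} (h0 : 0 < c0) (hc : ∀ i, c0 ≤ c i)
    (sep : ∀ i j, v i ≠ v j → c0 / (c i * c j) ≤ |v i - v j|) (t : ℝ) {R : ℝ} (hR : 0 < R) (x : ℝ) :
    ∃ x', x ≤ x' ∧ x' + c0 / 32 / (4 * R) ^ 2 ≤ x + c0 / 32 / R ^ 2 ∧
      ∀ y, x' ≤ y → y ≤ x' + c0 / 32 / (4 * R) ^ 2 → ∀ k, R ≤ c k → c k < 4 * R →
        c0 / 1024 / c k ^ 2 ≤ |y + 0 - v k| ∧ c0 / 1024 / c k ^ 2 ≤ |y + t - v k| := by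
  set Y := c0 / 32 / R ^ 2 with hY
  have hYp : 0 < Y := by positivity
  have e : c0 / 32 / (4 * R) ^ 2 = Y / 16 := by rw [hY]; field_simp; ring
  rw [e]
  by_contra! H
  obtain ⟨y0, a0, b0, k0, c0', d0, f0⟩ := H x le_rfl (by linarith)
  obtain ⟨y1, a1, b1, k1, c1, d1, f1⟩ := H (x + 6 / 16 * Y) (by linarith) (by linarith)
  obtain ⟨y2, a2, b2, k2, c2, d2, f2⟩ := H (x + 12 / 16 * Y) (by linarith) (by linarith)
  have key01 : ∀ u, |y0 + u - v k0| < c0 / 1024 / c k0 ^ 2 → |y1 + u - v k1| < c0 / 1024 / c k1 ^ 2 →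
    False := fun u => sch_two h0 hc sep hR (by linarith) (by linarith) c0' c1 d0 d1
  have key02 : ∀ u, |y0 + u - v k0| < c0 / 1024 / c k0 ^ 2 → |y2 + u - v k2| < c0 / 1024 / c k2 ^ 2 →
    False := fun u => sch_two h0 hc sep hR (by linarith) (by linarith) c0' c2 d0 d2
  have key12 : ∀ u, |y1 + u - v k1| < c0 / 1024 / c k1 ^ 2 → |y2 + u - v k2| < c0 / 1024 / c k2 ^ 2 →
    False := fun u => sch_two h0 hc sep hR (by linarith) (by linarith) c1 c2 d1 d2
  have g0 := fun h => key01 0 h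
  by_cases p0 : |y0 + 0 - v k0| < c0 / 1024 / c k0 ^ 2
  · have q1 := f1 (not_lt.1 fun h => key01 0 p0 h)
    have q2 := f2 (not_lt.1 fun h => key02 0 p0 h)
    exact key12 t q1 q2
  · have q0 := f0 (not_lt.1 p0)
    by_cases p1 : |y1 + 0 - v k1| < c0 / 1024 / c k1 ^ 2
    · have q2 := f2 (not_lt.1 fun h => key12 0 p1 h)
      exact key02 t q0 q2
    · exact key01 t q0 (f1 (not_lt.1 p1))

lemma sch_all {ι : Type*} {v c : ι → ℝ} {c0 : ℝ} (h0 : 0 < c0) (hc : ∀ i, c0 ≤ c i)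
    (sep : ∀ i j, v i ≠ v j → c0 / (c i * c j) ≤ |v i - v j|) (t : ℝ) (n : ℕ) :
    ∃ x, ∀ y, x ≤ y → y ≤ x + c0 / 32 / (4 ^ n * c0) ^ 2 → ∀ k, c k < 4 ^ n * c0 →
        c0 / 1024 / c k ^ 2 ≤ |y + 0 - v k| ∧ c0 / 1024 / c k ^ 2 ≤ |y + t - v k| := by
  induction n with
  | zero =>
    refine ⟨0, fun y _ _ k hk => ?_⟩
    have := hc k
    simp at hk
    linarith
  | succ n ih =>
    obtain ⟨x, hx⟩ := ih
    obtain ⟨x', h1, h2, h3⟩ := sch_step h0 hc sep t (R := 4 ^ n * c0) (by positivity) x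
    have e : (4:ℝ) ^ (n+1) * c0 = 4 * (4 ^ n * c0) := by ring
    rw [e]
    refine ⟨x', fun y hy hy' k hk => ?_⟩
    rcases lt_or_ge (c k) (4 ^ n * c0) with h | h
    · exact hx y (by linarith) (by linarith) k h
    · exact h3 y hy hy' k h hk

lemma good_near {ι : Type*} {v c : ι → ℝ} {c0 : ℝ} (h0 : 0 < c0) (hc : ∀ i, c0 ≤ c i)
    (sep : ∀ i j, v i ≠ v j → c0 / (c i * c j) ≤ |v i - v j|)
    (dense : ∀ x r : ℝ, 0 < r → ∃ i, |v i - x| < r) {R : ℝ} (hR : 0 < R) (x : ℝ)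
    (hx : ∀ y, x ≤ y → y ≤ x + c0 / 32 / R ^ 2 → ∀ k, c k < R → c0 / 1024 / c k ^ 2 ≤ |y - v k|) :
    ∃ i, x ≤ v i ∧ v i ≤ x + c0 / 32 / R ^ 2 ∧ R ≤ c i ∧
      ∀ k, v k ≠ v i → c0 / 1024 / c k ^ 2 ≤ |v i - v k| := by
  have cpos : ∀ i, 0 < c i := fun i => lt_of_lt_of_le h0 (hc i)
  set Y := c0 / 32 / R ^ 2 with hY
  have hYp : 0 < Y := by positivity
  have noc : ∀ i, x ≤ v i → v i ≤ x + Y → R ≤ c i := by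
    intro i h1 h2
    by_contra! h
    have := hx _ h1 h2 i h
    have := cpos i
    simp only [sub_self, abs_zero] at *
    have : 0 < c0 / 1024 / c i ^ 2 := by positivity
    linarith
  let A : Set ι := {i | R ≤ c i ∧ |v i - (x + Y / 2)| ≤ Y / 4 + c0 / 128 / c i ^ 2}
  have hAne : A.Nonempty := by
    obtain ⟨i, hi⟩ := dense (x + Y / 2) (Y / 4) (by linarith)
    have hi' := abs_lt.1 hi
    refine ⟨i, noc i (by linarith) (by linarith), ?_⟩
    have := cpos i
    have : 0 < c0 / 128 / c i ^ 2 := by positivity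
    linarith
  obtain ⟨i, hiA, hmin⟩ : ∃ i ∈ A, ∀ j ∈ A, c i / 2 ≤ c j := by
    have hne : (c '' A).Nonempty := hAne.image _
    have hb : BddBelow (c '' A) := ⟨R, by rintro _ ⟨j, hj, rfl⟩; exact hj.1⟩
    have hR' : R ≤ sInf (c '' A) := le_csInf hne (by rintro _ ⟨j, hj, rfl⟩; exact hj.1)
    obtain ⟨_, ⟨i, hi, rfl⟩, hlt⟩ := exists_lt_of_csInf_lt hne (show sInf (c '' A) < 2 * sInf (c '' A) by linarith)
    refine ⟨i, hi, fun j hj => ?_⟩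
    have := csInf_le hb ⟨j, hj, rfl⟩
    linarith
  have hRi := hiA.1
  have hci := cpos i
  have hk1 : c0 / 128 / c i ^ 2 ≤ Y / 4 := by
    have : Y / 4 = c0 / 128 / R ^ 2 := by rw [hY]; ring
    rw [this]; gcongr
  have hiA2 := abs_le.1 hiA.2
  refine ⟨i, by linarith, by linarith, hRi, fun k hk => ?_⟩
  have hck := cpos k
  rcases lt_or_ge (c k) R with h | h
  · exact hx _ (by linarith) (by linarith) k h
  rcases lt_or_ge (c k) (c i / 2) with h' | h'
  · have hkA : k ∉ A := fun hA => by linarith [hmin k hA]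
    have : Y / 4 + c0 / 128 / c k ^ 2 < |v k - (x + Y / 2)| := by
      by_contra! hh
      exact hkA ⟨h, hh⟩
    have tri : |v k - (x + Y / 2)| ≤ |v i - v k| + |v i - (x + Y / 2)| := by
      rw [abs_sub_comm (v i) (v k)]
      exact (abs_sub_le (v k) (v i) _)
    have h5 := hiA.2
    have h6 : c0 / 128 / c i ^ 2 ≤ c0 / 128 / c k ^ 2 / 4 := by
      have : c0 / 128 / c k ^ 2 / 4 = c0 / 128 / (2 * c k) ^ 2 := by ring
      rw [this]; gcongr; linarith
    have h7 : c0 / 1024 / c k ^ 2 = c0 / 128 / c k ^ 2 / 8 := by ring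
    have : 0 < c0 / 128 / c k ^ 2 := by positivity
    linarith
  · refine le_trans ?_ (sep i k (Ne.symm hk))
    calc c0 / 1024 / c k ^ 2 = c0 / (1024 * c k * c k) := by field_simp
      _ ≤ c0 / (c i * c k) := by gcongr; linarith

lemma pair_abs {ι : Type*} {v c : ι → ℝ} {c0 : ℝ} (h0 : 0 < c0) (hc : ∀ i, c0 ≤ c i)
    (sep : ∀ i j, v i ≠ v j → c0 / (c i * c j) ≤ |v i - v j|)
    (dense : ∀ x r : ℝ, 0 < r → ∃ i, |v i - x| < r) (t ε R : ℝ) (he : 0 < ε) (hR0 : 0 < R) :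
    ∃ i j, R ≤ c i ∧ R ≤ c j ∧ |v j - v i - t| ≤ ε ∧
      (∀ k, v k ≠ v i → c0 / 1024 / c k ^ 2 ≤ |v i - v k|) ∧
      (∀ k, v k ≠ v j → c0 / 1024 / c k ^ 2 ≤ |v j - v k|) := by
  obtain ⟨n, hn⟩ : ∃ n : ℕ, R / c0 + c0 / 32 / c0 ^ 2 / ε < 4 ^ n :=
    pow_unbounded_of_one_lt _ (by norm_num)
  have h1n : (1:ℝ) ≤ 4 ^ n := one_le_pow₀ (by norm_num)
  have hR' : R ≤ 4 ^ n * c0 := by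
    have : 0 < c0 / 32 / c0 ^ 2 / ε := by positivity
    have : R / c0 ≤ 4 ^ n := by linarith
    rwa [div_le_iff₀ h0] at this
  obtain ⟨x, hx⟩ := sch_all h0 hc sep t n
  have hp : (0:ℝ) < 4 ^ n * c0 := by positivity
  obtain ⟨i, i1, i2, i3, i4⟩ := good_near h0 hc sep dense hp x
    (fun y hy hy' k hk => by simpa using (hx y hy hy' k hk).1)
  obtain ⟨j, j1, j2, j3, j4⟩ := good_near h0 hc sep dense hp (x + t)
    (fun y hy hy' k hk => by
      simpa using (hx (y - t) (by linarith) (by linarith) k hk).2)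
  refine ⟨i, j, by linarith, by linarith, ?_, i4, j4⟩
  have : c0 / 32 / (4 ^ n * c0) ^ 2 ≤ ε := by
    have hn' : c0 / 32 / c0 ^ 2 / ε < 4 ^ n := by
      have : 0 < R / c0 := by positivity
      linarith
    rw [div_lt_iff₀ he] at hn'
    have e : c0 / 32 / (4 ^ n * c0) ^ 2 = c0 / 32 / c0 ^ 2 / (4 ^ n * 4 ^ n) := by
      field_simp
    rw [e, div_le_iff₀ (by positivity)]
    nlinarith [mul_pos he (show (0:ℝ) < 4 ^ n by positivity)]
  rw [abs_le]; constructor <;> linarith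


lemma sig_fin {D : ℝ} (hD : 5 ≤ D) (m : ℕ) : ∀ c w : ℕ → ℝ, (∀ n, 1 ≤ c n ^ 2 * (D - 1)) →
    (∀ n, D ≤ |w n|) → ∃ S : ℕ → ℝ, (∀ n, S n ∈ Set.Icc (-1:ℝ) 1) ∧
      ∀ n < m, S n * (w n - S (n+1)) * c n ^ 2 = 1 := by
  induction m with
  | zero => exact fun c w _ _ => ⟨fun _ => 0, fun n => by norm_num, by simp⟩
  | succ m ih =>
    intro c w hc hw
    obtain ⟨S, hS, hr⟩ := ih (fun n => c (n+1)) (fun n => w (n+1)) (fun n => hc _) (fun n => hw _)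
    have h1 : D - 1 ≤ |w 0 - S 0| := by
      have := abs_sub_abs_le_abs_sub (w 0) (S 0)
      have h2 := abs_le.2 (hS 0)
      have := hw 0
      linarith
    have hne : w 0 - S 0 ≠ 0 := by
      intro h; rw [h, abs_zero] at h1; linarith
    have hcp : 0 < c 0 ^ 2 := by
      by_contra h
      have := hc 0
      nlinarith
    refine ⟨fun n => Nat.casesOn n (1 / (c 0 ^ 2 * (w 0 - S 0))) S, ?_, ?_⟩
    · intro n
      cases n with
      | zero =>
        show 1 / (c 0 ^ 2 * (w 0 - S 0)) ∈ _
        rw [Set.mem_Icc, ← abs_le, abs_div, abs_one, abs_mul, abs_of_pos hcp]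
        rw [div_le_one (by positivity)]
        have := hc 0
        nlinarith
      | succ n => exact hS n
    · intro n hn
      cases n with
      | zero =>
        show 1 / (c 0 ^ 2 * (w 0 - S 0)) * (w 0 - S 0) * c 0 ^ 2 = 1
        have : c 0 ≠ 0 := fun h => by rw [h] at hcp; simp at hcp
        field_simp
      | succ n => exact hr n (by omega)

lemma sig_inf {D : ℝ} (hD : 5 ≤ D) (c w : ℕ → ℝ) (hc : ∀ n, 1 ≤ c n ^ 2 * (D - 1))
    (hw : ∀ n, D ≤ |w n|) : ∃ S : ℕ → ℝ, (∀ n, |S n| ≤ 1) ∧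
      ∀ n, S n * (w n - S (n+1)) * c n ^ 2 = 1 := by
  choose S hS hr using fun m => sig_fin hD m c w hc hw
  have hK : IsCompact (Set.pi Set.univ (fun _ : ℕ => Set.Icc (-1:ℝ) 1)) :=
    isCompact_univ_pi fun _ => isCompact_Icc
  obtain ⟨T, hT, φ, hφ, hlim⟩ := hK.tendsto_subseq (x := S) (fun m n _ => hS m n)
  refine ⟨T, fun n => abs_le.2 (hT n trivial), fun n => ?_⟩
  rw [tendsto_pi_nhds] at hlim
  have h1 := (((hlim n).mul ((hlim (n+1)).const_sub (w n))).mul_const (c n ^ 2))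
  refine tendsto_nhds_unique h1 ?_
  refine tendsto_const_nhds.congr' ?_
  filter_upwards [Filter.eventually_ge_atTop (n+1)] with m hm
  exact (hr (φ m) n (by have := hφ.id_le m; simp at this; omega)).symm

set_option maxHeartbeats 1000000 in
theorem cf_main (c w a q : ℕ → ℝ) {c0 D : ℝ} (h0 : 0 < c0) (hD : 5 ≤ D)
    (hc : ∀ n, c0 ≤ |c n|) (hD1 : 1 ≤ c0 ^ 2 * (D - 1)) (hD2 : 4 ≤ c0 * (D - 1))
    (hw : ∀ n, D ≤ |w n|)
    (a0 : a 0 = 1) (q0 : q 0 = 0)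
    (ra : ∀ n, a (n+2) / c (n+1) + a n / c n = w n * a (n+1))
    (rq : ∀ n, q (n+2) / c (n+1) + q n / c n = w n * q (n+1))
    (wr : ∀ n, a n * q (n+1) - q n * a (n+1) = c n) :
    ∃ (α : ℝ) (W : ℕ → ℝ),
      (∀ n, |q (n+1)| * |α * q (n+1) - a (n+1)| * W n = 1) ∧
      (∀ n, abs (W n - |w n|) ≤ 1 / c n ^ 2 + 1 / c (n+1) ^ 2) ∧
      (∀ n, q (n+1) ≠ 0 ∧ 2 * |q (n+1)| ≤ |q (n+2)|) ∧
      (∀ M > 0, ∀ va vc : ℝ, (∀ n, c0 ≤ |va * q n - vc * a n|) →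
        (∀ n, |c n| ≤ M * |va * q n - vc * a n| * |va * q (n+1) - vc * a (n+1)|) →
        1 ≤ 16 * M * |vc| * |α * vc - va|) := by
  have cne : ∀ n, c n ≠ 0 := fun n h => by
    have := hc n; rw [h, abs_zero] at this; linarith
  have csq : ∀ n, c0 ^ 2 ≤ c n ^ 2 := fun n => by
    rw [← sq_abs (c n)]; exact pow_le_pow_left₀ h0.le (hc n) 2
  have hc1 : ∀ n, 1 ≤ c n ^ 2 * (D - 1) := fun n => by nlinarith [csq n]
  obtain ⟨σ, hσ, hσr⟩ := sig_inf hD c w hc1 hw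
  have big : ∀ n s, |s| ≤ 1 → D - 1 ≤ |w n - s| := by
    intro n s hs
    have := abs_sub_abs_le_abs_sub (w n) s
    have := hw n
    linarith
  have small : ∀ n s z, |s| ≤ 1 → z * (w n - s) * c n ^ 2 = 1 → |z| ≤ 1 / c n ^ 2 := by
    intro n s z hs hz
    have hcp : 0 < c n ^ 2 := by have := cne n; positivity
    have h1 : |z| * |w n - s| * c n ^ 2 = 1 := by
      rw [← abs_of_pos hcp, ← abs_mul, ← abs_mul, hz, abs_one]
    rw [le_div_iff₀ hcp]
    have := big n s hs
    have h3 : 0 ≤ |z| * c n ^ 2 := by positivity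
    nlinarith
  -- q
  have q1 : q 1 = c 0 := by have := wr 0; rw [a0, q0] at this; simpa using this
  have hqne : ∀ n, q (n+1) ≠ 0 ∧ |q n / (c n * q (n+1))| ≤ 1 ∧
      |q n / (c n * q (n+1))| ≤ 1 / c n ^ 2 := by
    intro n
    induction n with
    | zero => refine ⟨by simpa [q1] using cne 0, by simp [q0], by simp [q0]; positivity⟩
    | succ n ih =>
      obtain ⟨i1, i2, i3⟩ := ih
      have e : q (n+2) = c (n+1) * (w n - q n / (c n * q (n+1))) * q (n+1) := by
        have := rq n
        have c1 := cne n
        have c2 := cne (n+1)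
        field_simp at this ⊢
        linear_combination this
      have hb := big n _ i2
      set ρ := q n / (c n * q (n+1))
      have hne : w n - ρ ≠ 0 := by
        intro h; rw [h, abs_zero] at hb; linarith
      have hq2 : q (n+2) ≠ 0 := by
        rw [e]; exact mul_ne_zero (mul_ne_zero (cne _) hne) i1
      have e2 : q (n+1) / (c (n+1) * q (n+1+1)) = 1 / (c (n+1) ^ 2 * (w n - ρ)) := by
        rw [show n + 1 + 1 = n + 2 by ring, e]
        have c2 := cne (n+1)
        field_simp
      have hcp : 0 < c (n+1) ^ 2 := by have := cne (n+1); positivity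
      have e3 : |q (n+1) / (c (n+1) * q (n+1+1))| = 1 / (c (n+1) ^ 2 * |w n - ρ|) := by
        rw [e2, abs_div, abs_one, abs_mul, abs_of_pos hcp]
      refine ⟨hq2, ?_, ?_⟩
      · rw [e3, div_le_one (by positivity)]
        nlinarith [hc1 (n+1)]
      · rw [e3]
        gcongr
        nlinarith
  set ρ : ℕ → ℝ := fun n => q n / (c n * q (n+1)) with hρ
  have hρq : ∀ n, q n = ρ n * c n * q (n+1) := by
    intro n
    have := (hqne n).1
    have := cne n
    simp only [hρ]; field_simp
  have hρ1 : ∀ n, |ρ n| ≤ 1 := fun n => (hqne n).2.1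
  have hρ2 : ∀ n, |ρ n| ≤ 1 / c n ^ 2 := fun n => (hqne n).2.2
  set α := a 1 / q 1 - σ 0 with hα
  set r : ℕ → ℝ := fun n => α * q n - a n with hr
  have rr : ∀ n, r (n+2) / c (n+1) + r n / c n = w n * r (n+1) := by
    intro n
    simp only [hr]
    linear_combination α * rq n - ra n
  have r0 : r 0 = -1 := by simp [hr, q0, a0]
  have rσ : ∀ n, r (n+1) = σ n * c n * r n := by
    intro n
    induction n with
    | zero =>
      rw [r0]
      simp only [hr, hα, q1]
      have := cne 0
      field_simp
      ring
    | succ n ih =>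
      have h1 : r n = c n * r (n+1) * (w n - σ (n+1)) := by
        rw [ih]; linear_combination (- r n) * hσr n
      have h2 := rr n
      have c1 := cne n
      have c2 := cne (n+1)
      have h3 : r n / c n = r (n+1) * (w n - σ (n+1)) := by
        rw [h1]; field_simp
      rw [h3] at h2
      have h4 : r (n+2) / c (n+1) = σ (n+1) * r (n+1) := by linear_combination h2
      rw [div_eq_iff c2] at h4
      show r (n+2) = _
      rw [h4]; ring
  have rback : ∀ n, r n = c n * r (n+1) * (w n - σ (n+1)) := by
    intro n
    rw [rσ n]; linear_combination (- r n) * hσr n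
  have wr2 : ∀ n, r (n+1) * q (n+1) * (ρ n - w n + σ (n+1)) = 1 := by
    intro n
    have h1 : r (n+1) * q n - q (n+1) * r n = c n := by
      simp only [hr]; linear_combination wr n
    rw [rback n, hρq n] at h1
    apply mul_left_cancel₀ (cne n)
    linear_combination h1
  refine ⟨α, fun n => |w n - ρ n - σ (n+1)|, ?_, ?_, ?_, ?_⟩
  · intro n
    rw [← abs_mul, ← abs_mul]
    have : q (n+1)*(α*q (n+1)-a (n+1))*(w n - ρ n - σ (n+1)) = -1 := by
      have := wr2 n
      simp only [hr] at this
      linear_combination -this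
    rw [this, abs_neg, abs_one]
  · intro n
    calc _ ≤ |w n - ρ n - σ (n+1) - w n| := abs_abs_sub_abs_le_abs_sub _ _
      _ = |ρ n + σ (n+1)| := by rw [← abs_neg]; congr 1; ring
      _ ≤ |ρ n| + |σ (n+1)| := abs_add_le _ _
      _ ≤ _ := add_le_add (hρ2 n) (small (n+1) _ _ (hσ (n+2)) (hσr (n+1)))
  · intro n
    refine ⟨(hqne n).1, ?_⟩
    have e : q (n+2) = c (n+1) * (w n - ρ n) * q (n+1) := by
      have := rq n
      have c1 := cne n
      have c2 := cne (n+1)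
      rw [hρq n] at this
      field_simp at this ⊢
      linear_combination this
    rw [e, abs_mul, abs_mul]
    have := big n _ (hρ1 n)
    have h3 : c0 * (D - 1) ≤ |c (n+1)| * |w n - ρ n| :=
      mul_le_mul (hc _) this (by linarith) (abs_nonneg _)
    have := abs_nonneg (q (n+1))
    nlinarith
  · intro M hM va vc hx hg
    set x : ℕ → ℝ := fun n => va * q n - vc * a n with hxdef
    change ∀ n, c0 ≤ |x n| at hx
    change ∀ n, |c n| ≤ M * |x n| * |x (n+1)| at hg
    have σc : ∀ n, |σ n * c n| * (|c n| * |w n - σ (n+1)|) = 1 := by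
      intro n
      rw [← abs_mul, ← abs_mul, ← abs_one]
      congr 1
      linear_combination hσr n
    have σc2 : ∀ n, |σ n * c n| ≤ 1 / 4 := by
      intro n
      have h3 : c0 * (D - 1) ≤ |c n| * |w n - σ (n+1)| :=
        mul_le_mul (hc _) (big n _ (hσ _)) (by linarith) (abs_nonneg _)
      have := σc n
      have := abs_nonneg (σ n * c n)
      nlinarith
    have hex : ∃ n, 2 * |σ n * c n| * |x n| ≤ |x (n+1)| := by
      by_contra! H
      have hdec : ∀ n, |x n| ≤ |x 0| * (1/2) ^ n := by
        intro n
        induction n with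
        | zero => simp
        | succ n ih =>
          have h1 := H n
          have h2 := σc2 n
          have h3 := abs_nonneg (x n)
          have : |x (n+1)| ≤ |x n| * (1/2) := by nlinarith
          calc _ ≤ _ := this
            _ ≤ |x 0| * (1/2) ^ n * (1/2) := by gcongr
            _ = _ := by ring
      have hx0 : 0 < |x 0| := lt_of_lt_of_le h0 (hx 0)
      obtain ⟨n, hn⟩ := exists_pow_lt_of_lt_one (show 0 < c0 / |x 0| by positivity)
        (show (1/2:ℝ) < 1 by norm_num)
      rw [lt_div_iff₀ hx0] at hn
      have := hdec n
      have := hx n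
      linarith
    classical
    have hzc : ∀ n, (α * vc - va) * c n = r n * (x (n+1) - σ n * c n * x n) := by
      intro n
      have e : (α * vc - va) * c n = - (r (n+1) * x n - r n * x (n+1)) := by
        rw [← wr n]; simp only [hr, hxdef]; ring
      rw [e, rσ n]; ring
    have hz : ∀ n, 2 * |σ n * c n| * |x n| ≤ |x (n+1)| →
        |r n| * |x (n+1)| ≤ 2 * (|α * vc - va| * |c n|) := by
      intro n hn
      rw [← abs_mul (α * vc - va), hzc n, abs_mul]
      have h1 : |x (n+1)| - |σ n * c n * x n| ≤ |x (n+1) - σ n * c n * x n| :=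
        abs_sub_abs_le_abs_sub _ _
      rw [abs_mul (σ n * c n)] at h1
      have : |x (n+1)| ≤ 2 * |x (n+1) - σ n * c n * x n| := by linarith
      nlinarith [abs_nonneg (r n)]
    have hspec := Nat.find_spec hex
    have hmin := fun m => Nat.find_min hex (m := m)
    set N := Nat.find hex with hN
    rcases hNN : N with _ | m
    · rw [hNN] at hspec
      have h1 := hz 0 hspec
      rw [r0, abs_neg, abs_one, one_mul] at h1
      have hx0 : |x 0| = |vc| := by simp [hxdef, q0, a0]
      have h2 := hg 0
      rw [hx0] at h2
      have hcp : 0 < |c 0| := abs_pos.2 (cne 0)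
      have hv := abs_nonneg vc
      simp only [zero_add] at h1 h2
      have h3 : |c 0| ≤ M * |vc| * (2 * (|α * vc - va| * |c 0|)) :=
        h2.trans (mul_le_mul_of_nonneg_left h1 (by positivity))
      have h4 : 1 * |c 0| ≤ (2 * M * |vc| * |α * vc - va|) * |c 0| := by linarith
      have h5 := le_of_mul_le_mul_right h4 hcp
      have : 0 ≤ M * |vc| * |α * vc - va| := by positivity
      linarith
    · rw [hNN] at hspec hmin
      have hm := hmin m (by omega)
      push Not at hm
      have hB := hz (m+1) hspec
      -- bound of vc
      have hvc : vc * c m = q (m+1) * (ρ m * c m * x (m+1) - x m) := by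
        have e : vc * c m = q m * x (m+1) - q (m+1) * x m := by
          rw [← wr m]; simp only [hxdef]; ring
        rw [e]; nth_rewrite 1 [hρq m]; ring
      have hcm : 0 < |c m| := abs_pos.2 (cne m)
      have hcm1 : 0 < |c (m+1)| := abs_pos.2 (cne (m+1))
      have hbig := big m _ (hσ (m+1))
      have hxm : 2 * (|c m| * |x (m+1)|) ≤ |x m| := by
        have h1 := σc m
        have h2 : |x (m+1)| * (|c m| * |w m - σ (m+1)|) ≤ 2 * |x m| := by
          calc _ ≤ (2 * |σ m * c m| * |x m|) * (|c m| * |w m - σ (m+1)|) := by gcongr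
            _ = 2 * |x m| * (|σ m * c m| * (|c m| * |w m - σ (m+1)|)) := by ring
            _ = _ := by rw [h1, mul_one]
        have h3 : 0 ≤ |c m| * |x (m+1)| := by positivity
        nlinarith
      have hA : |q (m+1)| * |x m| ≤ 2 * (|vc| * |c m|) := by
        rw [← abs_mul vc, hvc, abs_mul]
        have h1 : |x m| - |ρ m * c m * x (m+1)| ≤ |ρ m * c m * x (m+1) - x m| := by
          rw [abs_sub_comm (ρ m * c m * x (m+1)) (x m)]; exact abs_sub_abs_le_abs_sub _ _
        have h2 : |ρ m * c m * x (m+1)| ≤ |c m| * |x (m+1)| := by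
          rw [mul_assoc, abs_mul, abs_mul (c m)]
          have := hρ1 m
          have h3 : 0 ≤ |c m| * |x (m+1)| := by positivity
          nlinarith
        have : |x m| ≤ 2 * |ρ m * c m * x (m+1) - x m| := by linarith
        nlinarith [abs_nonneg (q (m+1))]
      -- normalise
      set A := |x m| / |c m| with hAdef
      set B := |x (m+2)| / |c (m+1)| with hBdef
      set X := |x (m+1)| with hX
      have hA' : |q (m+1)| * A ≤ 2 * |vc| := by
        rw [hAdef, ← mul_div_assoc, div_le_iff₀ hcm]; linarith
      have hB' : |r (m+1)| * B ≤ 2 * |α * vc - va| := by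
        rw [hBdef, ← mul_div_assoc, div_le_iff₀ hcm1]
        have : m + 1 + 1 = m + 2 := rfl
        rw [this] at hB
        linarith
      have hXp : 0 < X := lt_of_lt_of_le h0 (hx (m+1))
      have gA : 1 ≤ M * (A * X) := by
        have := hg m
        rw [hAdef, show M * (|x m| / |c m| * X) = (M * |x m| * X) / |c m| by ring, le_div_iff₀ hcm]
        linarith
      have gB : 1 ≤ M * (B * X) := by
        have := hg (m+1)
        have e : m + 1 + 1 = m + 2 := rfl
        rw [e] at this
        rw [hBdef, show M * (|x (m+2)| / |c (m+1)| * X) = (M * X * |x (m+2)|) / |c (m+1)| by ring,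
          le_div_iff₀ hcm1]
        linarith
      have hsum : |w m| * X ≤ A + B := by
        have e : x (m+2) / c (m+1) + x m / c m = w m * x (m+1) := by
          simp only [hxdef]
          linear_combination va * rq m - vc * ra m
        rw [hX, ← abs_mul, ← e, hAdef, hBdef, ← abs_div, ← abs_div, add_comm]
        exact abs_add_le _ _
      have hA0 : 0 ≤ A := by positivity
      have hB0 : 0 ≤ B := by positivity
      have hAB : |w m| ≤ 2 * M * (A * B) := by
        have hw0 := abs_nonneg (w m)
        rcases le_total A B with h | h
        · have h1 : |w m| * X ≤ 2 * B := by linarith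
          have h2 : |w m| * X ≤ (2 * M * (A * B)) * X := by
            calc _ ≤ 2 * B * 1 := by linarith
              _ ≤ 2 * B * (M * (A * X)) := by gcongr
              _ = _ := by ring
          exact le_of_mul_le_mul_right h2 hXp
        · have h1 : |w m| * X ≤ 2 * A := by linarith
          have h2 : |w m| * X ≤ (2 * M * (A * B)) * X := by
            calc _ ≤ 2 * A * 1 := by linarith
              _ ≤ 2 * A * (M * (B * X)) := by gcongr
              _ = _ := by ring
          exact le_of_mul_le_mul_right h2 hXp
      have hW : |r (m+1)| * |q (m+1)| * |ρ m - w m + σ (m+1)| = 1 := by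
        rw [← abs_mul, ← abs_mul, wr2 m, abs_one]
      have hW2 : |ρ m - w m + σ (m+1)| ≤ 2 * |w m| := by
        have h1 := abs_le.1 (hρ1 m)
        have h2 := abs_le.1 (hσ (m+1))
        have h3 := hw m
        have h4 := le_abs_self (w m)
        have h5 := neg_abs_le (w m)
        rw [abs_le]; constructor <;> linarith
      have hqr : 1 ≤ 2 * |w m| * (|r (m+1)| * |q (m+1)|) := by
        rw [← hW]
        have : 0 ≤ |r (m+1)| * |q (m+1)| := by positivity
        nlinarith
      have hprod : (|q (m+1)| * A) * (|r (m+1)| * B) ≤ (2 * |vc|) * (2 * |α * vc - va|) := by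
        gcongr
      calc 1 ≤ 2 * |w m| * (|r (m+1)| * |q (m+1)|) := hqr
        _ ≤ 2 * (2 * M * (A * B)) * (|r (m+1)| * |q (m+1)|) := by gcongr
        _ = 4 * M * ((|q (m+1)| * A) * (|r (m+1)| * B)) := by ring
        _ ≤ 4 * M * ((2 * |vc|) * (2 * |α * vc - va|)) := by gcongr
        _ = _ := by ring


def Good (G : Subgroup SL2R) (M : ℝ) (h : SL2R) : Prop :=
  ∀ g ∈ G, entryC g ≠ 0 → dt h g ≠ 0 → |entryC h| ≤ M * |entryC g| * |dt h g|

lemma Good.inv {G : Subgroup SL2R} {M : ℝ} {h : SL2R} (hh : h ∈ G) (H : Good G M h) :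
    Good G M h⁻¹ := by
  intro k hk hc hd
  have e1 : dt h⁻¹ k = entryC (h * k) := by rw [dt_eq, inv_inv]
  have e2 : dt h (h * k) = entryC k := by
    rw [dt_eq]; congr 1; group
  have := H (h * k) (G.mul_mem hh hk) (by rwa [← e1]) (by rwa [e2])
  rw [e2, ← e1] at this
  rw [eC_inv, abs_neg]
  linarith

lemma tr_norm {G : Subgroup SL2R} {μ : ℝ} (hμ : 0 < μ) (hT : HasTr G μ) {g : SL2R} (hg : g ∈ G)
    (hc : entryC g ≠ 0) (E : ℝ) : ∃ g' ∈ G, entryA g' = entryA g ∧ entryC g' = entryC g ∧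
      E ≤ -entryD g' / entryC g' ∧ -entryD g' / entryC g' ≤ E + μ := by
  obtain ⟨q, hq, a, b, c, d⟩ := hT ⌊(-entryD g / entryC g - E) / μ⌋
  have h1 := Int.floor_le ((-entryD g / entryC g - E) / μ)
  have h2 := Int.lt_floor_add_one ((-entryD g / entryC g - E) / μ)
  set k : ℝ := ((⌊(-entryD g / entryC g - E) / μ⌋ : ℤ) : ℝ)
  rw [le_div_iff₀ hμ] at h1
  rw [div_lt_iff₀ hμ] at h2
  have eC : entryC (g * q) = entryC g := by rw [eC_mul, a, c]; ring
  have eD : -entryD (g * q) / entryC (g * q) = -entryD g / entryC g - k * μ := by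
    rw [eC, eD_mul, b, d]; field_simp; ring
  refine ⟨g * q, G.mul_mem hg hq, by rw [eA_mul, a, c]; ring, eC, ?_, ?_⟩
  · rw [eD]; linarith
  · rw [eD]; linarith

lemma exists_pair {G : Subgroup SL2R} (hG : IsNonUniformLattice G) {μ : ℝ} (hμ : 0 < μ)
    (hT : HasTr G μ) {c0 : ℝ} (h0 : 0 < c0) (hc0 : ∀ g ∈ G, entryC g ≠ 0 → c0 ≤ |entryC g|)
    (t ε R E : ℝ) (hε : 0 < ε) (hR : 0 < R) :
    ∃ g ∈ G, ∃ h ∈ G, R ≤ |entryC g| ∧ R ≤ |entryC h| ∧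
      |entryA h / entryC h - entryA g / entryC g - t| ≤ ε ∧
      Good G (1024 / c0) g ∧ Good G (1024 / c0) h ∧
      E ≤ -entryD g / entryC g ∧ -entryD g / entryC g ≤ E + μ ∧
      0 ≤ -entryD h / entryC h ∧ -entryD h / entryC h ≤ μ := by
  let ι := {g : SL2R // g ∈ G ∧ entryC g ≠ 0}
  let v : ι → ℝ := fun g => entryA g.1 / entryC g.1
  let c : ι → ℝ := fun g => |entryC g.1|
  have hdiff : ∀ i j : ι, |v i - v j| = |dt i.1 j.1| / (c i * c j) := by
    intro i j
    have hi := i.2.2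
    have hj := j.2.2
    simp only [v, c, ← abs_mul, ← abs_div, dt]
    congr 1
    field_simp
  have cpos : ∀ i : ι, 0 < c i := fun i => abs_pos.2 i.2.2
  have hne : ∀ i j : ι, v i ≠ v j ↔ dt i.1 j.1 ≠ 0 := by
    intro i j
    rw [← sub_ne_zero, ← abs_pos, hdiff, ← abs_pos (a := dt i.1 j.1)]
    have := mul_pos (cpos i) (cpos j)
    constructor
    · intro h
      by_contra hn
      have : |dt i.1 j.1| = 0 := le_antisymm (not_lt.1 hn) (abs_nonneg _)
      rw [this, zero_div] at h
      exact lt_irrefl _ h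
    · intro h; positivity
  obtain ⟨i, j, hi, hj, hij, gi, gj⟩ := pair_abs (v := v) (c := c) h0
    (fun i => hc0 i.1 i.2.1 i.2.2) (by
      intro i j hv
      rw [hdiff]
      have := mul_pos (cpos i) (cpos j)
      have h2 := (hne i j).1 hv
      rw [dt_eq] at h2 ⊢
      have := hc0 _ (G.mul_mem (G.inv_mem i.2.1) j.2.1) h2
      gcongr) (by
      intro x r hr
      obtain ⟨g, hg, hc, h⟩ := dense_orbit hG hμ hT x r hr
      exact ⟨⟨g, hg, hc⟩, h⟩) t ε R hε hR
  have good : ∀ i : ι, (∀ k, v k ≠ v i → c0 / 1024 / c k ^ 2 ≤ |v i - v k|) →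
      ∀ g' : SL2R, entryA g' = entryA i.1 → entryC g' = entryC i.1 → Good G (1024 / c0) g' := by
    intro i H g' ha hc k hk hkc hd
    have e : dt g' k = dt i.1 k := by simp only [dt, ha, hc]
    rw [e] at hd ⊢
    rw [hc]
    have h1 := H ⟨k, hk, hkc⟩ (by
      have := (hne i ⟨k, hk, hkc⟩).2 hd
      exact this.symm)
    rw [hdiff] at h1
    have p1 := cpos i
    have p2 := cpos ⟨k, hk, hkc⟩
    simp only [c] at h1 p1 p2
    rw [div_div, div_le_div_iff₀ (by positivity) (by positivity)] at h1
    have : |entryC i.1| * (c0 * |entryC k|) ≤ (1024 * |entryC k| * |dt i.1 k|) * |entryC k| := by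
      linarith
    have h3 : |entryC i.1| * c0 ≤ 1024 * |entryC k| * |dt i.1 k| := by
      apply le_of_mul_le_mul_right _ p2
      linarith
    calc |entryC i.1| = |entryC i.1| * c0 / c0 := by field_simp
      _ ≤ (1024 * |entryC k| * |dt i.1 k|) / c0 := by gcongr
      _ = _ := by ring
  obtain ⟨g, hg, ga, gc, g1, g2⟩ := tr_norm hμ hT i.2.1 i.2.2 E
  obtain ⟨h, hh, ha, hc, h1, h2⟩ := tr_norm hμ hT j.2.1 j.2.2 0
  refine ⟨g, hg, h, hh, by rw [gc]; exact hi, by rw [hc]; exact hj, ?_, good i gi g ga gc,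
    good j gj h ha hc, g1, g2, h1, by linarith⟩
  rw [ga, gc, ha, hc]
  exact hij

def wd (s s' : SL2R) : ℝ := entryA s' / entryC s' + entryD s / entryC s

lemma seq_exists {G : Subgroup SL2R} (hG : IsNonUniformLattice G) {μ : ℝ} (hμ : 0 < μ)
    (hT : HasTr G μ) {c0 : ℝ} (h0 : 0 < c0) (hc0 : ∀ g ∈ G, entryC g ≠ 0 → c0 ≤ |entryC g|)
    (D : ℝ) (t : ℕ → ℝ) : ∃ s : ℕ → SL2R,
      (∀ n, s n ∈ G ∧ ((n : ℝ) + 1) / 2 ≤ |entryC (s n)| ∧ Good G (1024 / c0) (s n)) ∧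
      (∀ i, D ≤ wd (s (2*i)) (s (2*i+1)) ∧ wd (s (2*i)) (s (2*i+1)) ≤ D + 2 * μ) ∧
      (∀ i : ℕ, |wd (s (2*i+1)) (s (2*i+2)) - t (i+1)| ≤ 1 / (i + 2)) := by
  have H := fun i : ℕ => exists_pair hG hμ hT h0 hc0 (t i) (1 / (i + 1)) (i + 1) (D + μ)
    (by positivity) (by positivity)
  choose g hg h hh gR hR hgh gG hGd g1 g2 h1 h2 using H
  let s : ℕ → SL2R := fun n => if n % 2 = 0 then h (n / 2) else (g (n / 2 + 1))⁻¹
  have se : ∀ i, s (2 * i) = h i := by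
    intro i
    have : 2 * i % 2 = 0 := by omega
    have e : 2 * i / 2 = i := by omega
    simp only [s, this, e, if_true]
  have so : ∀ i, s (2 * i + 1) = (g (i+1))⁻¹ := by
    intro i
    have : (2 * i + 1) % 2 = 1 := by omega
    have e : (2 * i + 1) / 2 = i := by omega
    simp [s, this, e]
  refine ⟨s, ?_, ?_, ?_⟩
  · intro n
    obtain ⟨i, rfl | rfl⟩ := Nat.even_or_odd' n
    · rw [se]
      refine ⟨hh i, ?_, hGd i⟩
      have := hR i
      push_cast
      have : (0:ℝ) ≤ i := by positivity
      linarith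
    · rw [so]
      refine ⟨G.inv_mem (hg _), ?_, (gG _).inv (hg _)⟩
      have := gR (i+1)
      rw [eC_inv, abs_neg]
      push_cast at this ⊢
      linarith
  · intro i
    rw [se, so, wd, eA_inv, eC_inv]
    have := g1 (i+1)
    have := g2 (i+1)
    have := h1 i
    have := h2 i
    have e1 : entryD (g (i+1)) / -entryC (g (i+1)) = -entryD (g (i+1)) / entryC (g (i+1)) := by
      rw [div_neg, neg_div]
    have e2 : entryD (h i) / entryC (h i) = -(-entryD (h i) / entryC (h i)) := by
      rw [neg_div, neg_neg]
    rw [e1, e2]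
    constructor <;> linarith
  · intro i
    have e : 2 * i + 2 = 2 * (i + 1) := by ring
    rw [e, se, so, wd, eD_inv, eC_inv]
    have := hgh (i+1)
    rw [div_neg, ← sub_eq_add_neg]
    push_cast at this
    convert this using 2
    ring

def Pr (s : ℕ → SL2R) : ℕ → SL2R
  | 0 => 1
  | n + 1 => Pr s n * s n

lemma build {G : Subgroup SL2R} (hG : IsNonUniformLattice G) {μ : ℝ} (hμ : 0 < μ)
    (hT : HasTr G μ) : ∃ B K T0 : ℝ, 0 < K ∧ ∀ t : ℕ → ℝ, (∀ i, T0 ≤ t i) →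
      ∃ (α : ℝ) (W : ℕ → ℝ), (∀ i, W (2 * i) ≤ B) ∧
        (∀ i : ℕ, |W (2 * i + 1) - t (i + 1)| ≤ 3 / (i + 1)) ∧
        (∀ k > 0, {n | k < W n}.Infinite → k ∈ LagrangeSet G α) ∧
        (∀ k, K ≤ k → k ∈ LagrangeSet G α → {n | k < W n}.Infinite) := by
  obtain ⟨c0, h0, hc0⟩ := exists_c0 hG.1 hμ hT
  set D := 5 + (1 + 1 / c0 ^ 2) + (1 + 4 / c0) with hD
  have p1 : 0 < 1 / c0 ^ 2 := by positivity
  have p2 : 0 < 4 / c0 := by positivity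
  have hD1 : 1 ≤ c0 ^ 2 * (D - 1) := by
    have : c0 ^ 2 * (1 / c0 ^ 2) = 1 := by field_simp
    have h2 : 0 < c0 ^ 2 := by positivity
    nlinarith
  have hD2 : 4 ≤ c0 * (D - 1) := by
    have : c0 * (4 / c0) = 4 := by field_simp
    nlinarith
  refine ⟨D + 2 * μ + 2 * (1 / c0 ^ 2), 16 * (1024 / c0), D + 1, by positivity, fun t ht => ?_⟩
  obtain ⟨s, hs, he, ho⟩ := seq_exists hG hμ hT h0 hc0 D t
  have sC : ∀ n, entryC (s n) ≠ 0 := by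
    intro n h
    have := (hs n).2.1
    rw [h, abs_zero] at this
    have : (0:ℝ) ≤ n := by positivity
    linarith
  have PG : ∀ n, Pr s n ∈ G := by
    intro n
    induction n with
    | zero => exact G.one_mem
    | succ n ih => exact G.mul_mem ih (hs n).1
  have Ps : ∀ n, Pr s (n+1) = Pr s n * s n := fun n => rfl
  set c : ℕ → ℝ := fun n => entryC (s n) with hcdef
  have cc : ∀ n, c0 ≤ |c n| := fun n => hc0 _ (hs n).1 (sC n)
  set w : ℕ → ℝ := fun n => wd (s n) (s (n+1)) with hwdef
  have wo : ∀ i : ℕ, |w (2 * i + 1) - t (i+1)| ≤ 1 / (i + 2) := ho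
  have wo' : ∀ i : ℕ, D ≤ w (2 * i + 1) := by
    intro i
    have h1 := (abs_le.1 (wo i)).1
    have : (1:ℝ) / (i + 2) ≤ 1 := by
      rw [div_le_one (by positivity)]
      have : (0:ℝ) ≤ i := by positivity
      linarith
    have := ht (i+1)
    linarith
  have hw : ∀ n, D ≤ w n := by
    intro n
    obtain ⟨i, rfl | rfl⟩ := Nat.even_or_odd' n
    · exact (he i).1
    · exact wo' i
  have D0 : 0 < D := by positivity
  have wabs : ∀ n, |w n| = w n := fun n => abs_of_pos (D0.trans_le (hw n))
  have c1 : ∀ n, 1 / c n ^ 2 ≤ 1 / c0 ^ 2 := by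
    intro n
    rw [← sq_abs (c n)]
    have := cc n
    gcongr
  have c2 : ∀ n : ℕ, 1 ≤ n → ∀ i : ℕ, 2 * i + 1 ≤ n → 1 / c n ^ 2 ≤ 1 / ((i:ℝ) + 1) := by
    intro n _ i hi
    have h1 : ((n : ℝ) + 1) / 2 ≤ |c n| := (hs n).2.1
    have h2 : (2 * (i:ℝ) + 1) ≤ n := by exact_mod_cast hi
    have h3 : (i:ℝ) + 1 ≤ |c n| := by linarith
    rw [← sq_abs (c n)]
    have : (0:ℝ) ≤ i := by positivity
    apply one_div_le_one_div_of_le (by positivity)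
    nlinarith
  have hrc : ∀ n, entryA (Pr s (n+2)) / c (n+1) + entryA (Pr s n) / c n = w n * entryA (Pr s (n+1)) ∧
      entryC (Pr s (n+2)) / c (n+1) + entryC (Pr s n) / c n = w n * entryC (Pr s (n+1)) := by
    intro n
    have e : Pr s n = Pr s (n+1) * (s n)⁻¹ := by rw [Ps]; group
    have n1 := sC n
    have n2 := sC (n+1)
    rw [Ps (n+1), e]
    simp only [eA_mul (Pr s (n+1)), eC_mul (Pr s (n+1)), eA_inv, eC_inv, hcdef, hwdef, wd]
    constructor
    · field_simp; ring
    · field_simp; ring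
  have wr : ∀ n, dt (Pr s n) (Pr s (n+1)) = c n := by
    intro n
    rw [Ps, dt_eq, hcdef]; congr 1; group
  obtain ⟨α, W, hW1, hW2, hq, hfar⟩ := cf_main c w (fun n => entryA (Pr s n))
    (fun n => entryC (Pr s n)) h0 (by linarith) cc hD1 hD2 (fun n => by rw [wabs]; exact hw n)
    e_one.1 e_one.2.2.1 (fun n => (hrc n).1) (fun n => (hrc n).2) wr
  have Wpos : ∀ n, 0 < W n := by
    intro n
    have h := hW1 n
    by_contra hn
    have : |entryC (Pr s (n+1))| * |α * entryC (Pr s (n+1)) - entryA (Pr s (n+1))| * W n ≤ 0 :=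
      mul_nonpos_of_nonneg_of_nonpos (by positivity) (not_lt.1 hn)
    linarith
  have hval : ∀ n, |α - entryA (Pr s (n+1)) / entryC (Pr s (n+1))| =
      1 / (W n * entryC (Pr s (n+1)) ^ 2) := by
    intro n
    have h := hW1 n
    have q0 := (hq n).1
    have W0 := Wpos n
    have e : α - entryA (Pr s (n+1)) / entryC (Pr s (n+1)) =
      (α * entryC (Pr s (n+1)) - entryA (Pr s (n+1))) / entryC (Pr s (n+1)) := by field_simp
    have q1 : 0 < |entryC (Pr s (n+1))| := abs_pos.2 q0
    rw [e, abs_div, ← sq_abs (entryC (Pr s (n+1))), div_eq_div_iff (by positivity) (by positivity)]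
    linear_combination |entryC (Pr s (n+1))| * h
  have hmono : StrictMono (fun n => |entryC (Pr s (n+1))|) := by
    apply strictMono_nat_of_lt_succ
    intro n
    have := hq n
    have q1 : 0 < |entryC (Pr s (n+1))| := abs_pos.2 this.1
    show |entryC (Pr s (n+1))| < |entryC (Pr s (n+2))|
    linarith [this.2]
  have hinj : Function.Injective (fun n => entryA (Pr s (n+1)) / entryC (Pr s (n+1))) := by
    intro m n hmn
    simp only at hmn
    have q1 := (hq m).1
    have q2 := (hq n).1
    rw [div_eq_div_iff q1 q2] at hmn
    have hd : dt (Pr s (m+1)) (Pr s (n+1)) = 0 := by rw [dt]; linarith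
    obtain ⟨σ, h1, -, h3⟩ := dt_zero hG.1 hμ hT (PG _) (PG _) hd
    apply hmono.injective
    simp only
    rw [h3, abs_mul]
    have : |σ| = 1 := by
      rw [← sq_eq_sq₀ (abs_nonneg _) zero_le_one, sq_abs, h1, one_pow]
    rw [this, one_mul]
  refine ⟨α, W, ?_, ?_, ?_, ?_⟩
  · intro i
    have h1 := (abs_le.1 (hW2 (2 * i))).2
    rw [wabs] at h1
    have := c1 (2 * i)
    have := c1 (2 * i + 1)
    have h3 : w (2 * i) ≤ D + 2 * μ := (he i).2
    linarith
  · intro i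
    have h1 := hW2 (2 * i + 1)
    rw [wabs] at h1
    have h2 := c2 (2 * i + 1) (by omega) i (by omega)
    have h3 := c2 (2 * i + 1 + 1) (by omega) i (by omega)
    have h4 := wo i
    have h5 : (1:ℝ) / (i + 2) ≤ 1 / (i + 1) := by
      apply one_div_le_one_div_of_le (by positivity); linarith
    have h6 := abs_sub_le (W (2 * i + 1)) (w (2 * i + 1)) (t (i+1))
    have h7 : (3:ℝ) / (i + 1) = 1 / (i + 1) + 1 / (i + 1) + 1 / (i + 1) := by ring
    rw [h7]
    linarith
  · intro k hk hinf
    refine ⟨hk, ?_⟩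
    apply (hinf.image hinj.injOn).mono
    rintro _ ⟨n, hn, rfl⟩
    refine ⟨Pr s (n+1), PG _, (hq n).1, rfl, ?_⟩
    simp only
    rw [hval]
    have q1 : 0 < entryC (Pr s (n+1)) ^ 2 := by
      have := (hq n).1
      positivity
    apply one_div_lt_one_div_of_lt (by positivity)
    have : k < W n := hn
    gcongr
  · intro k hk hkL
    have k0 : 0 < k := hkL.1
    apply Set.Infinite.of_image (fun n => entryA (Pr s (n+1)) / entryC (Pr s (n+1)))
    apply hkL.2.mono
    rintro v ⟨g, hg, hgc, rfl, hlt⟩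
    by_cases hz : ∃ n, dt (Pr s n) g = 0
    · obtain ⟨n, hn⟩ := hz
      rcases n with _ | n
      · exact absurd (by rw [← dt_one]; exact hn) hgc
      obtain ⟨σ, h1, h2, h3⟩ := dt_zero hG.1 hμ hT (PG _) hg hn
      have σ0 : σ ≠ 0 := by rintro rfl; norm_num at h1
      have hv : entryA g / entryC g = entryA (Pr s (n+1)) / entryC (Pr s (n+1)) := by
        rw [h2, h3, mul_div_mul_left _ _ σ0]
      refine ⟨n, ?_, hv.symm⟩
      rw [hv, hval, h3, mul_pow, h1, one_mul] at hlt
      have q1 : 0 < entryC (Pr s (n+1)) ^ 2 := by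
        have := (hq n).1
        positivity
      have W0 := Wpos n
      rw [one_div_lt_one_div (by positivity) (by positivity)] at hlt
      exact lt_of_mul_lt_mul_right hlt q1.le
    · exfalso
      push Not at hz
      have ex : ∀ n, |entryA g * entryC (Pr s n) - entryC g * entryA (Pr s n)| = |dt (Pr s n) g| := by
        intro n
        rw [dt, ← abs_neg]; congr 1; ring
      have h := hfar (1024 / c0) (by positivity) (entryA g) (entryC g) (by
          intro n
          rw [ex, dt_eq]
          apply hc0 _ (G.mul_mem (G.inv_mem (PG n)) hg)
          rw [← dt_eq]; exact hz n) (by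
          intro n
          rw [ex, ex]
          have e1 : dt (Pr s n) g = entryC ((Pr s n)⁻¹ * g) := dt_eq _ _
          have e2 : dt (Pr s (n+1)) g = dt (s n) ((Pr s n)⁻¹ * g) := by
            rw [← dt_left (Pr s n) (s n), ← Ps]; congr 1; group
          have n1 := hz n
          have n2 := hz (n+1)
          rw [e1] at n1 ⊢
          rw [e2] at n2 ⊢
          exact (hs n).2.2 _ (G.mul_mem (G.inv_mem (PG n)) hg) n1 n2)
      have g0 : 0 < |entryC g| := abs_pos.2 hgc
      have e : α - entryA g / entryC g = (α * entryC g - entryA g) / entryC g := by field_simp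
      rw [e, abs_div, ← sq_abs (entryC g), div_lt_div_iff₀ (by positivity) (by positivity)] at hlt
      have h9 : |α * entryC g - entryA g| * (k * |entryC g|) < 1 := by
        apply lt_of_mul_lt_mul_right _ g0.le
        linarith
      have h10 : 16 * (1024 / c0) * |entryC g| * |α * entryC g - entryA g| ≤
          k * |entryC g| * |α * entryC g - entryA g| := by gcongr
      linarith

lemma odd_lim {W t : ℕ → ℝ} (h : ∀ i : ℕ, |W (2 * i + 1) - t (i + 1)| ≤ 3 / (i + 1)) {δ : ℝ}
    (hδ : 0 < δ) : ∃ N : ℕ, ∀ i ≥ N, |W (2 * i + 1) - t (i + 1)| < δ := by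
  obtain ⟨N, hN⟩ := exists_nat_gt (3 / δ)
  refine ⟨N, fun i hi => (h i).trans_lt ?_⟩
  rw [div_lt_iff₀ hδ] at hN
  rw [div_lt_iff₀ (by positivity)]
  have : (N:ℝ) ≤ i := by exact_mod_cast hi
  nlinarith

lemma inf_odd {S : Set ℕ} {N : ℕ} (h : ∀ i ≥ N, 2 * i + 1 ∈ S) : S.Infinite := by
  apply Set.infinite_of_injective_forall_mem (f := fun i => 2 * (i + N) + 1)
  · intro a b hab
    simp only at hab
    omega
  · intro i
    exact h _ (by omega)

theorem hall_main (G : Subgroup SL2R)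
    (hG : IsNonUniformLattice G) (hcusp : HasCuspAtInfty G) :
    ∃ L₀ : ℝ,
      (∀ L : ℝ≥0∞, ENNReal.ofReal L₀ ≤ L → L ∈ LagrangeSpectrum G) ∧
      (∀ L : ℝ, L₀ ≤ L → ∃ α : ℝ, LagrangeValue G α = ENNReal.ofReal L) := by
  obtain ⟨μ, hμ, hT⟩ := hasTr_of_cusp hcusp
  obtain ⟨B, K, T0, hK, H⟩ := build hG hμ hT
  set L₀ := max (max B K) T0 with hL0
  have b1 : B ≤ L₀ := (le_max_left _ _).trans (le_max_left _ _)
  have b2 : K ≤ L₀ := (le_max_right _ _).trans (le_max_left _ _)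
  have b3 : T0 ≤ L₀ := le_max_right _ _
  have fin : ∀ L : ℝ, L₀ ≤ L → ∃ α : ℝ, LagrangeValue G α = ENNReal.ofReal L := by
    intro L hL
    obtain ⟨α, W, he, ho, hi, hu⟩ := H (fun _ => L) (fun _ => b3.trans hL)
    refine ⟨α, le_antisymm ?_ ?_⟩
    · apply sSup_le
      rintro _ ⟨k, hk, rfl⟩
      apply ENNReal.ofReal_le_ofReal
      by_contra hlt
      push Not at hlt
      refine hu k (by linarith) hk ?_
      obtain ⟨N, hN⟩ := odd_lim (t := fun _ => L) ho (sub_pos.2 hlt)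
      apply (Set.finite_lt_nat (2 * N + 1)).subset
      intro n hn
      have hn : k < W n := hn
      by_contra hge
      have hge : 2 * N + 1 ≤ n := by simpa using hge
      obtain ⟨i, rfl | rfl⟩ := Nat.even_or_odd' n
      · have := he i
        linarith
      · have := (abs_lt.1 (hN i (by omega))).2
        linarith
    · apply le_of_forall_lt
      intro b hb
      have hbt : b ≠ ⊤ := hb.ne_top
      have hbL : b.toReal < L := by
        rw [← ENNReal.ofReal_toReal hbt] at hb
        exact (ENNReal.ofReal_lt_ofReal_iff'.1 hb).1
      obtain ⟨k, hk1, hk2⟩ := exists_between hbL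
      have k0 : 0 < k := lt_of_le_of_lt ENNReal.toReal_nonneg hk1
      have : k ∈ LagrangeSet G α := by
        apply hi k k0
        obtain ⟨N, hN⟩ := odd_lim (t := fun _ => L) ho (sub_pos.2 hk2)
        apply inf_odd (N := N)
        intro i hi
        have := (abs_lt.1 (hN i hi)).1
        show k < W (2 * i + 1)
        linarith
      calc b = ENNReal.ofReal b.toReal := (ENNReal.ofReal_toReal hbt).symm
        _ < ENNReal.ofReal k := (ENNReal.ofReal_lt_ofReal_iff k0).2 hk1
        _ ≤ _ := le_sSup (Set.mem_image_of_mem _ this)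
  refine ⟨L₀, ?_, fin⟩
  intro L hL
  by_cases hLt : L = ⊤
  · subst hLt
    obtain ⟨α, W, he, ho, hi, hu⟩ := H (fun i => L₀ + i) (fun i => by
      have : (0:ℝ) ≤ i := by positivity
      linarith)
    refine ⟨α, ?_⟩
    rw [eq_top_iff]
    apply le_of_forall_lt
    intro b hb
    have hbt : b ≠ ⊤ := hb.ne
    have hb0 : 0 ≤ b.toReal := ENNReal.toReal_nonneg
    have : b.toReal + 1 ∈ LagrangeSet G α := by
      apply hi _ (by linarith)
      obtain ⟨N, hN⟩ := exists_nat_gt (b.toReal + 4)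
      apply inf_odd (N := N)
      intro i hi
      have h1 := (abs_le.1 (ho i)).1
      have h2 : (3:ℝ) / (i + 1) ≤ 3 := by
        apply div_le_self (by norm_num)
        have : (0:ℝ) ≤ i := by positivity
        linarith
      have h3 : (N:ℝ) ≤ i := by exact_mod_cast hi
      show b.toReal + 1 < W (2 * i + 1)
      push_cast at h1
      linarith
    calc b = ENNReal.ofReal b.toReal := (ENNReal.ofReal_toReal hbt).symm
      _ < ENNReal.ofReal (b.toReal + 1) := (ENNReal.ofReal_lt_ofReal_iff (by linarith)).2 (by linarith)
      _ ≤ _ := le_sSup (Set.mem_image_of_mem _ this)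
  · have h1 : L₀ ≤ L.toReal := (ENNReal.ofReal_le_iff_le_toReal hLt).1 hL
    obtain ⟨α, hα⟩ := fin _ h1
    exact ⟨α, by rw [hα, ENNReal.ofReal_toReal hLt]⟩

/-- **Hall ray for Fuchsian groups.** If `G ≤ SL(2,ℝ)` is a non-uniform lattice and `∞`
is a cusp of `G`, then the Lagrange spectrum `𝓛(G,∞)` contains a Hall ray: there is
`L₀ ∈ ℝ` such that every extended real `L` with `L₀ ≤ L ≤ +∞` belongs to `𝓛(G,∞)`;
in particular every real `L ≥ L₀` is the Lagrange value of some `α ∈ ℝ`. -/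
theorem hall_ray_for_fuchsian_groups (G : Subgroup SL2R)
    (hG : IsNonUniformLattice G) (hcusp : HasCuspAtInfty G) :
    ∃ L₀ : ℝ,
      (∀ L : ℝ≥0∞, ENNReal.ofReal L₀ ≤ L → L ∈ LagrangeSpectrum G) ∧
      (∀ L : ℝ, L₀ ≤ L → ∃ α : ℝ, LagrangeValue G α = ENNReal.ofReal L) := by
  exact hall_main G hG hcusp
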